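/- arXiv:1707.01291 — 6 statements merged into one kernel-verified Lean document; each statement's English description precedes it below -/
import Mathlib

section
/- Let A be a commutative unital complex Banach algebra. Suppose T : [0,1] → (A →L[ℂ] A) is a family of continuous unital ℂ-algebra endomorphisms of A such that: (i) for every a ∈ A, the map t ↦ T_t(a) from [0,1] to A is continuous (in the norm topology of A); (ii) T_0 is the identity map of A; (iii) there exists a character χ in the character space of A such that T_1(a) = χ(a)·1 for all a ∈ A. Then the character space of A is a contractible topological space. -/
/-- If a commutative unital complex Banach algebra `A` admits a pointwise-norm-continuous
family `T : [0,1] → (A →L[ℂ] A)` of continuous unital algebra endomorphisms with `T 0 = id`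
and `T 1 = χ(·) • 1` for some character `χ`, then the character space of `A` is contractible. -/
theorem characterSpace_contractible_of_homotopy
    {A : Type*} [NormedCommRing A] [NormedAlgebra ℂ A] [CompleteSpace A]
    (T : unitInterval → (A →L[ℂ] A))
    (hTmul : ∀ t (a b : A), T t (a * b) = T t a * T t b)
    (hTone : ∀ t, T t 1 = 1)
    (hTcont : ∀ a : A, Continuous fun t => T t a)
    (hT0 : T 0 = ContinuousLinearMap.id ℂ A)
    (hT1 : ∃ χ : WeakDual.characterSpace ℂ A, ∀ a : A, T 1 a = χ a • (1 : A)) :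
    ContractibleSpace (WeakDual.characterSpace ℂ A) := by
  obtain ⟨χ, hχ⟩ := hT1
  have ev : Continuous fun p : A × WeakDual.characterSpace ℂ A => p.2 p.1 := by
    refine continuous_prod_of_continuous_lipschitzWith _ ‖(1 : A)‖₊ ?_ ?_
    · intro a
      exact (WeakDual.eval_continuous a).comp continuous_subtype_val
    · intro φ
      refine LipschitzWith.of_dist_le_mul fun x y => ?_
      rw [dist_eq_norm, dist_eq_norm]
      change ‖φ x - φ y‖ ≤ _
      rw [← map_sub]
      refine ((WeakDual.toStrongDual (φ : WeakDual ℂ A)).le_opNorm (x - y)).trans ?_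
      exact mul_le_mul_of_nonneg_right (WeakDual.CharacterSpace.norm_le_norm_one φ)
        (norm_nonneg _)
  let H : unitInterval × WeakDual.characterSpace ℂ A → WeakDual.characterSpace ℂ A :=
    fun p => ⟨((WeakDual.CharacterSpace.toCLM p.2).comp (T p.1) : A →L[ℂ] ℂ), by
      constructor
      · intro h
        have h1 : p.2 (T p.1 1) = 0 := DFunLike.congr_fun h (1 : A)
        rw [hTone, map_one] at h1
        exact one_ne_zero h1
      · intro x y
        change p.2 (T p.1 (x * y)) = p.2 (T p.1 x) * p.2 (T p.1 y)
        rw [hTmul, map_mul]⟩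
  have hH : Continuous H := by
    refine Continuous.subtype_mk (WeakDual.continuous_of_continuous_eval fun a => ?_) _
    exact ev.comp (((hTcont a).comp continuous_fst).prodMk continuous_snd)
  rw [contractible_iff_id_nullhomotopic]
  refine ⟨χ, ⟨⟨⟨H, hH⟩, fun φ => ?_, fun φ => ?_⟩⟩⟩
  · apply WeakDual.CharacterSpace.ext
    intro a
    change φ (T 0 a) = φ a
    rw [hT0]; rfl
  · apply WeakDual.CharacterSpace.ext
    intro a
    change φ (T 1 a) = χ a
    rw [hχ, map_smul, map_one, smul_eq_mul, mul_one]
end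

section
/- Let S be a commutative monoid with identity e. Suppose the indicator function 1_e of the set {e} belongs to S*_1, and suppose there exists a continuous path γ : [0,1] → S*_1 with γ(0) equal to the constant function 1 and γ(1) = 1_e. Then the space S*_1 is path-connected. -/
/-- If the indicator function of `{e}` is a bounded nonnegative semicharacter of a commutative
monoid `S` and there is a continuous path in the semicharacter space `S*_1` (with the topology
of pointwise convergence) from the constant function `1` to this indicator, then `S*_1` is
path-connected. -/
theorem semicharSpace_pathConnected_of_path
    {S : Type*} [CommMonoid S] [DecidableEq S]
    (ind : S → ℝ) (hind : ind = fun s => if s = 1 then (1 : ℝ) else 0)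
    (hmem : ind 1 = 1 ∧ (∀ x y : S, ind (x * y) = ind x * ind y) ∧
      ∀ s : S, ind s ∈ Set.Icc (0 : ℝ) 1)
    (γ : unitInterval →
      {ρ : S → ℝ // ρ 1 = 1 ∧ (∀ x y : S, ρ (x * y) = ρ x * ρ y) ∧
        ∀ s : S, ρ s ∈ Set.Icc (0 : ℝ) 1})
    (hγ : Continuous γ)
    (hγ0 : (γ 0 : S → ℝ) = fun _ => 1)
    (hγ1 : (γ 1 : S → ℝ) = ind) :
    PathConnectedSpace
      {ρ : S → ℝ // ρ 1 = 1 ∧ (∀ x y : S, ρ (x * y) = ρ x * ρ y) ∧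
        ∀ s : S, ρ s ∈ Set.Icc (0 : ℝ) 1} := by
  have key : ∀ ρ : {ρ : S → ℝ // ρ 1 = 1 ∧ (∀ x y : S, ρ (x * y) = ρ x * ρ y) ∧
        ∀ s : S, ρ s ∈ Set.Icc (0 : ℝ) 1}, Joined ρ ⟨ind, hmem⟩ := by
    intro ρ
    refine ⟨⟨⟨fun t => ⟨fun s => ρ.1 s * (γ t).1 s, ?_, ?_, ?_⟩, ?_⟩, ?_, ?_⟩⟩
    · simp only [ρ.2.1, (γ t).2.1, mul_one]
    · intro x y
      simp only [ρ.2.2.1 x y, (γ t).2.2.1 x y]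
      ring
    · intro s
      have h1 := ρ.2.2.2 s
      have h2 := (γ t).2.2.2 s
      exact ⟨mul_nonneg h1.1 h2.1, mul_le_one₀ h1.2 h2.1 h2.2⟩
    · refine Continuous.subtype_mk (continuous_pi fun s => ?_) _
      exact continuous_const.mul ((continuous_apply s).comp (continuous_subtype_val.comp hγ))
    · apply Subtype.ext
      funext s
      simp [hγ0]
    · apply Subtype.ext
      funext s
      by_cases h : s = 1
      · subst h
        simp [hγ1, hind, ρ.2.1]
      · simp [hγ1, hind, h]
  exact ⟨⟨⟨ind, hmem⟩⟩, fun x y => (key x).trans (key y).symm⟩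
end

section
/- Let S be a commutative monoid with identity e, and let ρ : S → ℝ satisfy ρ(e) = 1, ρ(xy) = ρ(x)ρ(y) for all x, y ∈ S, and 0 < ρ(s) < 1 for all s ∈ S with s ≠ e. For t ∈ [0,1) define ρ_t : S → ℝ by ρ_t(s) = ρ(s)^{t/(1−t)} (real power), and define ρ_1 = 1_e, the indicator function of {e}. Then: (i) each ρ_t belongs to S*_1 (in particular 1_e is multiplicative); (ii) ρ_0 is the constant function 1; and (iii) the map t ↦ ρ_t from [0,1] to S*_1 is continuous, i.e., it is a continuous path in S*_1 from the constant function 1 to 1_e. -/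
/-- If `ρ` is a semicharacter of a commutative monoid `S` with `0 < ρ s < 1` off the identity,
then the family `ρ_t = ρ ^ (t/(1-t))` for `t ∈ [0,1)`, extended by the indicator of `{1}` at
`t = 1`, is a continuous path in the semicharacter space `S*_1` (with the topology of pointwise
convergence) from the constant function `1` to the indicator of `{1}`. -/
theorem rpow_path_in_semicharSpace
    {S : Type*} [CommMonoid S] [DecidableEq S]
    (ρ : S → ℝ) (hρ1 : ρ 1 = 1) (hρmul : ∀ x y : S, ρ (x * y) = ρ x * ρ y)
    (hρlt : ∀ s : S, s ≠ 1 → 0 < ρ s ∧ ρ s < 1)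
    (F : unitInterval → S → ℝ)
    (hF : F = fun (t : unitInterval) (s : S) => if (t : ℝ) < 1 then ρ s ^ ((t : ℝ) / (1 - (t : ℝ)))
      else if s = 1 then (1 : ℝ) else 0) :
    (∀ t, F t 1 = 1 ∧ (∀ x y : S, F t (x * y) = F t x * F t y) ∧
        ∀ s : S, F t s ∈ Set.Icc (0 : ℝ) 1) ∧
      (F 0 = fun _ => 1) ∧
      (F 1 = fun s => if s = 1 then (1 : ℝ) else 0) ∧
      ∃ γ : unitInterval →
          {f : S → ℝ // f 1 = 1 ∧ (∀ x y : S, f (x * y) = f x * f y) ∧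
            ∀ s : S, f s ∈ Set.Icc (0 : ℝ) 1},
        Continuous γ ∧ ∀ t, (γ t : S → ℝ) = F t := by
  have pos : ∀ s, 0 < ρ s := fun s => by
    by_cases h : s = 1
    · rw [h, hρ1]; exact one_pos
    · exact (hρlt s h).1
  have le1 : ∀ s, ρ s ≤ 1 := fun s => by
    by_cases h : s = 1
    · rw [h, hρ1]
    · exact (hρlt s h).2.le
  have key : ∀ x y : S, x * y = 1 → x = 1 := fun x y hxy => by
    by_contra h
    have h1 := hρmul x y
    rw [hxy, hρ1] at h1
    nlinarith [(hρlt x h).2, pos y, le1 y]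
  have main : ∀ t, F t 1 = 1 ∧ (∀ x y : S, F t (x * y) = F t x * F t y) ∧
        ∀ s : S, F t s ∈ Set.Icc (0 : ℝ) 1 := by
    intro t
    subst hF
    by_cases ht : (t : ℝ) < 1
    · simp only [ht, if_true]
      refine ⟨by rw [hρ1, Real.one_rpow], fun x y => ?_, fun s => ⟨?_, ?_⟩⟩
      · rw [hρmul, Real.mul_rpow (pos x).le (pos y).le]
      · exact Real.rpow_nonneg (pos s).le _
      · exact Real.rpow_le_one (pos s).le (le1 s) (div_nonneg t.2.1 (by linarith))
    · simp only [ht, if_false]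
      refine ⟨by simp, fun x y => ?_, fun s => ?_⟩
      · by_cases hx : x = 1
        · simp [hx]
        · have : x * y ≠ 1 := fun h => hx (key x y h)
          simp [hx, this]
      · split_ifs <;> simp
  refine ⟨main, ?_, ?_, fun t => ⟨F t, main t⟩, ?_, fun t => rfl⟩
  · subst hF; funext s; simp
  · subst hF; funext s; simp
  refine Continuous.subtype_mk (continuous_pi fun s => ?_) _
  by_cases hs : s = 1
  · subst hs
    have : (fun t => F t 1) = fun _ => (1 : ℝ) := funext fun t => (main t).1
    rw [this]; exact continuous_const
  rw [continuous_iff_continuousAt]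
  intro t₀
  by_cases ht : (t₀ : ℝ) < 1
  · have hev : ∀ᶠ t : unitInterval in nhds t₀, (t : ℝ) < 1 :=
      continuous_subtype_val.continuousAt.eventually (gt_mem_nhds ht)
    have hc : ContinuousAt (fun t : unitInterval => ρ s ^ ((t : ℝ) / (1 - (t : ℝ)))) t₀ := by
      refine ContinuousAt.rpow continuousAt_const ?_ (Or.inl (pos s).ne')
      exact ContinuousAt.div (by fun_prop) (by fun_prop) (by linarith)
    refine hc.congr ?_
    filter_upwards [hev] with t h
    simp only [hF, h, if_true]
  · have h1 : (t₀ : ℝ) = 1 := le_antisymm t₀.2.2 (not_lt.1 ht)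
    have h0 : F t₀ s = 0 := by simp only [hF, ht, hs, if_false]
    have hl : 0 < -Real.log (ρ s) := by
      have := Real.log_neg (pos s) (hρlt s hs).2
      linarith
    set c := -Real.log (ρ s) with hcdef
    have hc : ContinuousAt (fun t : unitInterval => (1 - (t : ℝ)) / ((1 - t) + c * t)) t₀ := by
      refine ContinuousAt.div (by fun_prop) (by fun_prop) ?_
      rw [h1]; simp [hl.ne']
    unfold ContinuousAt at hc ⊢
    change Filter.Tendsto _ _ (nhds (F t₀ s))
    rw [h0]
    simp only [h1, sub_self, zero_div] at hc
    refine squeeze_zero (fun t => ((main t).2.2 s).1) (fun t => ?_) hc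
    by_cases h : (t : ℝ) < 1
    · have hp : 0 < 1 - (t : ℝ) := by linarith
      have ht0 : 0 ≤ (t : ℝ) := t.2.1
      have hd : 0 < (1 - (t : ℝ)) + c * t := by positivity
      have e : F t s = (Real.exp (c * (t / (1 - t))))⁻¹ := by
        simp only [hF, h, if_true]
        rw [Real.rpow_def_of_pos (pos s), ← Real.exp_neg, hcdef]
        congr 1; ring
      rw [e]
      have := Real.add_one_le_exp (c * ((t : ℝ) / (1 - t)))
      have e2 : (1 - (t : ℝ)) / ((1 - t) + c * t) = (c * ((t : ℝ) / (1 - t)) + 1)⁻¹ := by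
        rw [show c * ((t : ℝ) / (1 - t)) + 1 = ((1 - t) + c * t) / (1 - t) by
          field_simp; ring, inv_div]
      rw [e2]
      exact inv_anti₀ (by positivity) this
    · have h2 : (t : ℝ) = 1 := le_antisymm t.2.2 (not_lt.1 h)
      simp only [hF, h, hs, if_false, h2]
      simp
end

section
/- Let S be a commutative monoid with identity e. If there exists ρ : S → ℝ with ρ(e) = 1, ρ(xy) = ρ(x)ρ(y) for all x, y ∈ S, and 0 < ρ(s) < 1 for all s ∈ S with s ≠ e, then the space S*_1 is path-connected. -/
/-- If a commutative monoid `S` admits a semicharacter `ρ` with `ρ e = 1` and `0 < ρ s < 1`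
for all `s ≠ e`, then the semicharacter space `S*_1` (with the topology of pointwise
convergence) is path-connected. -/
theorem semicharSpace_pathConnected_of_strict_semichar
    {S : Type*} [CommMonoid S]
    (hρ : ∃ ρ : S → ℝ, ρ 1 = 1 ∧ (∀ x y : S, ρ (x * y) = ρ x * ρ y) ∧
      ∀ s : S, s ≠ 1 → 0 < ρ s ∧ ρ s < 1) :
    PathConnectedSpace
      {ρ : S → ℝ // ρ 1 = 1 ∧ (∀ x y : S, ρ (x * y) = ρ x * ρ y) ∧
        ∀ s : S, ρ s ∈ Set.Icc (0 : ℝ) 1} := by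
  classical
  obtain ⟨ρ, h1, hm, hs⟩ := hρ
  have hpos : ∀ s, 0 < ρ s := fun s => by
    by_cases h : s = 1
    · rw [h, h1]; exact one_pos
    · exact (hs s h).1
  have hle : ∀ s, ρ s ≤ 1 := fun s => by
    by_cases h : s = 1
    · rw [h, h1]
    · exact (hs s h).2.le
  let L : S → ℝ := fun s => -Real.log (ρ s)
  have hL1 : L 1 = 0 := by simp [L, h1]
  have hLm : ∀ x y, L (x * y) = L x + L y := fun x y => by
    simp only [L]
    rw [hm, Real.log_mul (hpos x).ne' (hpos y).ne']; ring
  have hLpos : ∀ s, s ≠ 1 → 0 < L s := fun s h =>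
    neg_pos.2 (Real.log_neg (hpos s) (hs s h).2)
  have hLnn : ∀ s, 0 ≤ L s := fun s =>
    neg_nonneg.2 (Real.log_nonpos (hpos s).le (hle s))
  have hmul1 : ∀ x y : S, x * y = 1 ↔ x = 1 ∧ y = 1 := fun x y => by
    constructor
    · intro h
      have h0 := hLm x y
      rw [h, hL1] at h0
      constructor
      · by_contra hx
        linarith [hLpos x hx, hLnn y]
      · by_contra hy
        linarith [hLpos y hy, hLnn x]
    · rintro ⟨rfl, rfl⟩; simp
  let F : S → ℝ → ℝ := fun s u =>
    if s = 1 then 1 else expNegInvGlue (u / L s) * Real.exp (L s)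
  have hFc : ∀ s, Continuous (F s) := fun s => by
    by_cases h : s = 1
    · simp only [F, h, if_true]; exact continuous_const
    · simp only [F, h, if_false]
      have hc : Continuous expNegInvGlue := (expNegInvGlue.contDiff (n := 0)).continuous
      exact (hc.comp (continuous_id.div_const _)).mul continuous_const
  have hF0 : ∀ s, F s 0 = if s = 1 then 1 else 0 := fun s => by
    simp [F, expNegInvGlue.zero]
  have hFp : ∀ s u, 0 < u → F s u = Real.exp (L s * (1 - u⁻¹)) := fun s u hu => by
    by_cases h : s = 1
    · simp [F, h, hL1]
    · have h2 : ¬ (u / L s ≤ 0) := not_le.2 (div_pos hu (hLpos s h))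
      simp only [F, h, if_false, expNegInvGlue, h2]
      rw [← Real.exp_add]
      congr 1
      rw [inv_div]; ring
  have hFone : ∀ s, F s 1 = 1 := fun s => by rw [hFp s 1 one_pos]; simp
  have hFm : ∀ u : ℝ, 0 ≤ u → ∀ x y, F (x * y) u = F x u * F y u := fun u hu x y => by
    rcases hu.eq_or_lt with rfl | hu
    · simp only [hF0, hmul1]
      by_cases hx : x = 1 <;> by_cases hy : y = 1 <;> simp [hx, hy]
    · rw [hFp _ _ hu, hFp _ _ hu, hFp _ _ hu, ← Real.exp_add, hLm]
      congr 1; ring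
  have hFI : ∀ u : ℝ, 0 ≤ u → u ≤ 1 → ∀ s, 0 ≤ F s u ∧ F s u ≤ 1 := fun u hu hu1 s => by
    rcases hu.eq_or_lt with rfl | hu
    · rw [hF0]; split_ifs <;> simp
    · rw [hFp _ _ hu]
      refine ⟨(Real.exp_pos _).le, Real.exp_le_one_iff.2 ?_⟩
      have := (one_le_inv₀ hu).2 hu1
      exact mul_nonpos_of_nonneg_of_nonpos (hLnn s) (by linarith)
  have hF1 : ∀ u, F 1 u = 1 := fun u => by simp [F]
  let X := {ρ : S → ℝ // ρ 1 = 1 ∧ (∀ x y : S, ρ (x * y) = ρ x * ρ y) ∧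
        ∀ s : S, ρ s ∈ Set.Icc (0 : ℝ) 1}
  let P : X → unitInterval → X := fun ψ u => ⟨fun s => ψ.1 s * F s u, by
    simp only [hF1, ψ.2.1, mul_one], fun x y => by
      simp only [hFm u u.2.1, ψ.2.2.1]; ring, fun s =>
      ⟨mul_nonneg (ψ.2.2.2 s).1 (hFI u u.2.1 u.2.2 s).1,
        mul_le_one₀ (ψ.2.2.2 s).2 (hFI u u.2.1 u.2.2 s).1 (hFI u u.2.1 u.2.2 s).2⟩⟩
  have hPc : ∀ ψ, Continuous (P ψ) := fun ψ =>
    Continuous.subtype_mk (continuous_pi fun s =>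
      continuous_const.mul ((hFc s).comp continuous_subtype_val)) _
  let one : X := ⟨fun _ => 1, rfl, fun _ _ => by simp, fun _ => by simp⟩
  have hP1 : ∀ ψ, P ψ 1 = ψ := fun ψ => by
    apply Subtype.ext; funext s
    simp [P, hFone]
  have hP0 : ∀ ψ, P ψ 0 = P one 0 := fun ψ => by
    apply Subtype.ext; funext s
    by_cases h : s = 1
    · simp [P, one, hF0, h, ψ.2.1]
    · simp [P, one, hF0, h]
  have hJ : ∀ ψ : X, Joined (P one 0) ψ := fun ψ =>
    ⟨⟨⟨P ψ, hPc ψ⟩, hP0 ψ, hP1 ψ⟩⟩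
  exact ⟨⟨one⟩, fun a b => (hJ a).symm.trans (hJ b)⟩
end

section
/- Let A be a commutative unital complex Banach algebra whose character space (with the weak-* topology) is contractible. Then A is a Hermite ring: for all natural numbers k < n, if F is an n×k matrix with entries in A that is left invertible (i.e., there exists a k×n matrix B with entries in A such that B·F is the k×k identity matrix), then there exists an invertible n×n matrix G with entries in A such that G_{ij} = F_{ij} for all 1 ≤ i ≤ n and 1 ≤ j ≤ k (the first k columns of G are the columns of F). -/
set_option linter.unusedSectionVars false
namespace LinHermite
open Filter Topology

/-- left invertibility up to a `q`-small error -/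
def LInv {R : Type*} [Ring R] (q : RingSeminorm R) (h : R) : Prop := ∃ y, q (y * h - 1) < 1

/-- commuting approximate inverse -/
def CInv {R : Type*} [Ring R] (q : RingSeminorm R) (h : R) : Prop :=
  ∃ y, y * h = h * y ∧ q (y * h - 1) < 1

section abs
variable {R : Type*} [NormedRing R] [NormedAlgebra ℝ R] [CompleteSpace R]

lemma q_sub_le (q : RingSeminorm R) (x y : R) : q (x - y) ≤ q x + q y := by
  rw [sub_eq_add_neg]; exact (map_add_le_add q _ _).trans (by rw [map_neg_eq_map])

lemma q_sub_comm (q : RingSeminorm R) (x y : R) : q (x - y) = q (y - x) := by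
  rw [← map_neg_eq_map, neg_sub]

lemma q_pow_le (q : RingSeminorm R) (h1 : q 1 ≤ 1) (x : R) (n : ℕ) : q (x ^ n) ≤ q x ^ n := by
  induction n with
  | zero => simpa using h1
  | succ n ih =>
    rw [pow_succ, pow_succ]
    exact (map_mul_le_mul q _ _).trans (mul_le_mul_of_nonneg_right ih (apply_nonneg q _))

lemma q_geom_le (q : RingSeminorm R) (h1 : q 1 ≤ 1) (x : R) (n : ℕ) :
    q (∑ i ∈ Finset.range n, x ^ i) ≤ ∑ i ∈ Finset.range n, q x ^ i := by
  induction n with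
  | zero => simp
  | succ n ih =>
    rw [Finset.sum_range_succ, Finset.sum_range_succ]
    exact (map_add_le_add q _ _).trans (add_le_add ih (q_pow_le q h1 x n))

lemma geom_le (r : ℝ) (h0 : 0 ≤ r) (h1 : r < 1) (n : ℕ) :
    ∑ i ∈ Finset.range n, r ^ i ≤ (1 - r)⁻¹ := by
  rw [← tsum_geometric_of_lt_one h0 h1]
  exact (summable_geometric_of_lt_one h0 h1).sum_le_tsum _ (fun i _ => pow_nonneg h0 i)

lemma q_geom_le' (q : RingSeminorm R) (h1 : q 1 ≤ 1) (x : R) (hx : q x < 1) (n : ℕ) :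
    q (∑ i ∈ Finset.range n, x ^ i) ≤ (1 - q x)⁻¹ :=
  (q_geom_le q h1 x n).trans (geom_le _ (apply_nonneg q _) hx n)

/-- Improving approximate inverses. -/
lemma linv_improve (q : RingSeminorm R) (h1 : q 1 ≤ 1) (h y : R) (hy : q (y * h - 1) < 1) :
    ∃ C > 0, ∀ η > 0, ∃ y', q y' ≤ C ∧ q (y' * h - 1) < η ∧
      (y * h = h * y → y' * h = h * y') := by
  set x := 1 - y * h with hx
  have hqx : q x < 1 := by rwa [hx, q_sub_comm]
  refine ⟨(1 - q x)⁻¹ * q y + 1, ?_, ?_⟩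
  · have : 0 < (1 - q x)⁻¹ := inv_pos.2 (by linarith)
    have := apply_nonneg q y
    positivity
  intro η hη
  obtain ⟨J, hJ⟩ := exists_pow_lt_of_lt_one hη hqx
  have key : (∑ i ∈ Finset.range J, x ^ i) * (y * h) = 1 - x ^ J := by
    rw [← geom_sum_mul_neg, hx]; congr 1; abel
  refine ⟨(∑ i ∈ Finset.range J, x ^ i) * y, ?_, ?_, ?_⟩
  · refine (map_mul_le_mul q _ _).trans ?_
    have := mul_le_mul_of_nonneg_right (q_geom_le' q h1 x hqx J) (apply_nonneg q y)
    linarith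
  · rw [mul_assoc, key, q_sub_comm, sub_sub_cancel]
    exact (q_pow_le q h1 x J).trans_lt hJ
  · intro hc
    have hcx : Commute x h := by
      rw [hx]
      refine (Commute.one_left h).sub_left ?_
      change y * h * h = h * (y * h)
      rw [← mul_assoc, ← hc]
    have : Commute (∑ i ∈ Finset.range J, x ^ i) h :=
      Commute.sum_left _ _ _ (fun i _ => hcx.pow_left i)
    rw [mul_assoc, hc, ← mul_assoc, this.eq, mul_assoc]

lemma ideal_smul_mem (N : Ideal R) (c : ℝ) {x : R} (hx : x ∈ N) : c • x ∈ N := by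
  rw [← one_mul x, ← smul_mul_assoc]; exact N.mul_mem_left _ hx

lemma one_add_mul_mem (N : Ideal R) {x y : R} (hx : x - 1 ∈ N) (hy : y - 1 ∈ N) :
    x * y - 1 ∈ N := by
  have : x * y - 1 = x * (y - 1) + (x - 1) := by noncomm_ring
  rw [this]; exact N.add_mem (N.mul_mem_left _ hy) hx

lemma ball_lemma (q : RingSeminorm R) (h1 : q 1 ≤ 1)
    (hs : ∀ (c : ℝ) x, q (c • x) ≤ |c| * q x) (N : Ideal R) (m : R) (hm : m ∈ N)
    (hqm : q m ≤ 1 / 2) (ε : ℝ) (hε : 0 < ε) :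
    ∃ E : Rˣ, (E : R) - 1 ∈ N ∧ q (1 + m - E) < ε := by
  obtain ⟨J, hJ⟩ := exists_pow_lt_of_lt_one (show 0 < ε / 2 by positivity)
    (show (1 / 2 : ℝ) < 1 by norm_num)
  set p : ℝ → R := fun s => ∑ i ∈ Finset.range J, (-(s • m)) ^ i with hp
  have hpc : Continuous fun s => m * p s := by
    simp only [hp]; fun_prop
  obtain ⟨C, hC⟩ := (isCompact_Icc (a := (0 : ℝ)) (b := 1)).exists_bound_of_continuousOn
    hpc.continuousOn
  obtain ⟨n, hn⟩ := exists_nat_gt (max C 1)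
  have hn1 : (1 : ℝ) < n := (le_max_right _ _).trans_lt hn
  have hnC : C < n := (le_max_left _ _).trans_lt hn
  have hn0 : (0 : ℝ) < n := by linarith
  have hqx : ∀ s ∈ Set.Icc (0 : ℝ) 1, q (-(s • m)) ≤ 1 / 2 := by
    intro s hs'
    rw [map_neg_eq_map]
    refine (hs s m).trans ?_
    rw [abs_of_nonneg hs'.1]
    nlinarith [hs'.1, hs'.2, apply_nonneg q m]
  have hmain : ∀ j : ℕ, j ≤ n → ∃ E : Rˣ, (E : R) - 1 ∈ N ∧
      q (1 + ((j : ℝ) / n) • m - E) ≤ ((1 + 1 / (n : ℝ)) ^ j - 1) * (1 / 2) ^ J := by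
    intro j
    induction j with
    | zero => intro _; exact ⟨1, by simp, by simp⟩
    | succ j ih =>
      intro hj
      obtain ⟨E, hE, hqE⟩ := ih (by omega)
      have hsI : (j : ℝ) / n ∈ Set.Icc (0 : ℝ) 1 := by
        constructor
        · positivity
        · rw [div_le_one hn0]; exact_mod_cast (by omega : j ≤ n)
      set s : ℝ := (j : ℝ) / n with hsdef
      set x := -(s • m) with hx
      have hqx' := hqx s hsI
      have hnorm : ‖-((1 / (n : ℝ)) • (m * p s))‖ < 1 := by
        rw [norm_neg, norm_smul, Real.norm_eq_abs, abs_of_pos (by positivity)]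
        have := hC s hsI
        rw [one_div, inv_mul_lt_iff₀ hn0]; linarith
      set U := Units.oneSub _ hnorm with hU
      have hUv : (U : R) = 1 + (1 / (n : ℝ)) • (m * p s) := by
        rw [hU, Units.val_oneSub]; abel
      have hgeom : p s * (1 + s • m) = 1 - x ^ J := by
        have := geom_sum_mul_neg x J
        simp only [hp]
        rw [← this, hx]; congr 1; abel
      have hmp : m * p s ∈ N := by
        have : m * p s = p s * m := by
          have : Commute m (p s) := by
            refine Commute.sum_right _ _ _ (fun i _ => ?_)
            exact Commute.pow_right (((Commute.refl m).smul_right s).neg_right) i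
          exact this
        rw [this]; exact N.mul_mem_left _ hm
      refine ⟨U * E, ?_, ?_⟩
      · rw [Units.val_mul]
        refine one_add_mul_mem N ?_ hE
        rw [hUv, add_sub_cancel_left]
        exact ideal_smul_mem N _ hmp
      · have hid : 1 + (((j + 1 : ℕ) : ℝ) / n) • m - ((U * E : Rˣ) : R)
            = (U : R) * (1 + s • m - E) + (1 / (n : ℝ)) • (m * x ^ J) := by
          have h2 : (U : R) * (1 + s • m) = 1 + s • m + (1 / (n : ℝ)) • (m - m * x ^ J) := by
            rw [hUv, add_mul, one_mul, smul_mul_assoc, mul_assoc, hgeom, mul_sub, mul_one]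
          have h3 : (((j + 1 : ℕ) : ℝ) / n) = s + 1 / n := by
            rw [hsdef]; push_cast; ring
          rw [mul_sub, h2, Units.val_mul, h3, add_smul, smul_sub]
          abel
        rw [hid]
        have hqU : q (U : R) ≤ 1 + 1 / (n : ℝ) := by
          rw [hUv]
          refine (map_add_le_add q _ _).trans (add_le_add h1 ?_)
          refine (hs _ _).trans ?_
          rw [abs_of_pos (by positivity)]
          have e1 : q (p s) ≤ 2 := by
            refine (q_geom_le' q h1 x (by linarith) J).trans ?_
            rw [inv_le_comm₀ (by linarith) (by norm_num)]
            linarith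
          have e2 : q (m * p s) ≤ 1 := by
            refine (map_mul_le_mul q _ _).trans ?_
            nlinarith [apply_nonneg q m, apply_nonneg q (p s)]
          have : 0 < 1 / (n : ℝ) := by positivity
          nlinarith
        have hqr : q ((1 / (n : ℝ)) • (m * x ^ J)) ≤ 1 / n * (1 / 2) ^ J := by
          refine (hs _ _).trans ?_
          rw [abs_of_pos (by positivity)]
          refine mul_le_mul_of_nonneg_left ?_ (by positivity)
          refine (map_mul_le_mul q _ _).trans ?_
          have e3 : q (x ^ J) ≤ (1 / 2) ^ J :=
            (q_pow_le q h1 x J).trans (pow_le_pow_left₀ (apply_nonneg q _) hqx' J)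
          have : 0 ≤ (1 / 2 : ℝ) ^ J := by positivity
          nlinarith [apply_nonneg q m, apply_nonneg q (x ^ J)]
        refine (map_add_le_add q _ _).trans ?_
        refine (add_le_add ((map_mul_le_mul q _ _).trans
          (mul_le_mul hqU hqE (apply_nonneg q _) (by positivity))) hqr).trans (le_of_eq ?_)
        rw [pow_succ]; ring
  obtain ⟨E, hE, hqE⟩ := hmain n le_rfl
  refine ⟨E, hE, ?_⟩
  rw [div_self hn0.ne', one_smul] at hqE
  refine hqE.trans_lt ?_
  have h4 : (1 + 1 / (n : ℝ)) ^ n ≤ 3 := by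
    have := Real.add_one_le_exp (1 / (n : ℝ))
    have h5 : (1 + 1 / (n : ℝ)) ^ n ≤ Real.exp (1 / n) ^ n :=
      pow_le_pow_left₀ (by positivity) (by linarith) n
    rw [← Real.exp_nat_mul, mul_one_div_cancel hn0.ne'] at h5
    linarith [Real.exp_one_lt_d9]
  have : 0 < (1 / 2 : ℝ) ^ J := by positivity
  nlinarith

/-- approximable by units in `1 + N` -/
def Cl (q : RingSeminorm R) (N : Ideal R) (h : R) : Prop :=
  ∀ ε > 0, ∃ E : Rˣ, (E : R) - 1 ∈ N ∧ q (h - E) < ε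

lemma cl_step (q : RingSeminorm R) (h1 : q 1 ≤ 1)
    (hs : ∀ (c : ℝ) x, q (c • x) ≤ |c| * q x) (N : Ideal R) (h : R) (hN : h - 1 ∈ N)
    (hh : LInv q h) : ∃ δ > 0, ∀ h', h' - 1 ∈ N → q (h' - h) < δ → Cl q N h → Cl q N h' := by
  obtain ⟨y, hy⟩ := hh
  obtain ⟨C, hC, hCy⟩ := linv_improve q h1 h y hy
  set i := h - 1 with hi
  set D := 1 + C * q i with hD
  have hqi := apply_nonneg q i
  have hDpos : 0 < D := by positivity
  refine ⟨1 / (2 * D), by positivity, ?_⟩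
  intro h' hN' hlt hcl ε hε
  obtain ⟨y, hyC, hyh, -⟩ := hCy (ε / (4 * (1 + q i))) (by positivity)
  set y' := 1 - y * i with hy'
  have e1 : y' * h - 1 = (1 - y * h) * i := by
    have : h = 1 + i := by rw [hi]; abel
    rw [hy', this]; noncomm_ring
  have e2 : q y' ≤ D := by
    refine (q_sub_le q _ _).trans (add_le_add h1 ?_)
    exact (map_mul_le_mul q _ _).trans (mul_le_mul_of_nonneg_right hyC hqi)
  set m := (h' - h) * y' with hm
  have hmN : m ∈ N := by
    have : m = (h' - 1) - (h - 1) - ((h' - h) * y) * i := by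
      rw [hm, hy']; noncomm_ring
    rw [this]
    exact N.sub_mem (N.sub_mem hN' hN) (N.mul_mem_left _ hN)
  have hqm : q m ≤ 1 / 2 := by
    refine (map_mul_le_mul q _ _).trans ?_
    have := mul_le_mul hlt.le e2 (apply_nonneg q _) (by positivity)
    refine this.trans (le_of_eq ?_)
    field_simp
  obtain ⟨E2, hE2, hqE2⟩ := hcl (ε / 8) (by positivity)
  have hE2pos : 0 ≤ q (E2 : R) := apply_nonneg q _
  obtain ⟨E1, hE1, hqE1⟩ := ball_lemma q h1 hs N m hmN hqm (ε / (4 * (1 + q (E2 : R))))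
    (by positivity)
  refine ⟨E1 * E2, ?_, ?_⟩
  · rw [Units.val_mul]; exact one_add_mul_mem N hE1 hE2
  · have hid : h' - ((E1 * E2 : Rˣ) : R) = (1 + m) * (h - E2) + (1 + m - E1) * E2
        - (h' - h) * (y' * h - 1) := by
      rw [Units.val_mul, hm]; noncomm_ring
    rw [hid, e1]
    have b1 : q ((1 + m) * (h - E2)) ≤ 3 / 2 * (ε / 8) := by
      refine (map_mul_le_mul q _ _).trans ?_
      have : q (1 + m) ≤ 3 / 2 := (map_add_le_add q _ _).trans (by linarith)
      exact mul_le_mul this hqE2.le (apply_nonneg q _) (by norm_num)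
    have b2 : q ((1 + m - E1) * E2) ≤ ε / 4 := by
      refine (map_mul_le_mul q _ _).trans ?_
      refine (mul_le_mul_of_nonneg_right hqE1.le hE2pos).trans ?_
      rw [div_mul_eq_mul_div, div_le_div_iff₀ (by positivity) (by norm_num)]
      nlinarith
    have b3 : q ((h' - h) * ((1 - y * h) * i)) ≤ ε / 4 := by
      refine (map_mul_le_mul q _ _).trans ?_
      have c1 : q (h' - h) ≤ 1 := by
        refine hlt.le.trans ?_
        rw [div_le_one (by positivity)]
        have : 0 ≤ C * q i := by positivity
        linarith
      have c2 : q ((1 - y * h) * i) ≤ ε / 4 := by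
        refine (map_mul_le_mul q _ _).trans ?_
        rw [q_sub_comm]
        refine (mul_le_mul_of_nonneg_right hyh.le hqi).trans ?_
        rw [div_mul_eq_mul_div, div_le_div_iff₀ (by positivity) (by norm_num)]
        nlinarith
      nlinarith [apply_nonneg q (h' - h), apply_nonneg q ((1 - y * h) * i)]
    have := q_sub_le q ((1 + m) * (h - E2) + (1 + m - E1) * E2) ((h' - h) * ((1 - y * h) * i))
    have := map_add_le_add q ((1 + m) * (h - E2)) ((1 + m - E1) * E2)
    linarith

lemma cl_path (q : RingSeminorm R) (hq : ∀ x, q x ≤ ‖x‖) (h1 : q 1 ≤ 1)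
    (hs : ∀ (c : ℝ) x, q (c • x) ≤ |c| * q x) (N : Ideal R) (Γ : unitInterval → R)
    (hc : Continuous Γ) (hN : ∀ s, Γ s - 1 ∈ N) (hL : ∀ s, LInv q (Γ s)) (h0 : Γ 0 = 1) :
    ∀ s, Cl q N (Γ s) := by
  have hclopen : IsClopen {s | Cl q N (Γ s)} := by
    constructor
    · rw [← isSeqClosed_iff_isClosed]
      intro u s hu hus ε hε
      have ht : Tendsto (fun n => ‖Γ s - Γ (u n)‖) atTop (𝓝 0) := by
        have := (tendsto_const_nhds (x := Γ s)).sub ((hc.tendsto s).comp hus)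
        simpa using this.norm
      obtain ⟨n, hn⟩ := (ht.eventually (gt_mem_nhds (show 0 < ε / 2 by positivity))).exists
      obtain ⟨E, hE, hqE⟩ := hu n (ε / 2) (by positivity)
      refine ⟨E, hE, ?_⟩
      have : Γ s - E = (Γ s - Γ (u n)) + (Γ (u n) - E) := by abel
      rw [this]
      refine (map_add_le_add q _ _).trans_lt ?_
      linarith [hq (Γ s - Γ (u n))]
    · rw [isOpen_iff_mem_nhds]
      intro s hcl
      obtain ⟨δ, hδ, hst⟩ := cl_step q h1 hs N (Γ s) (hN s) (hL s)
      have : ∀ᶠ s' in 𝓝 s, ‖Γ s' - Γ s‖ < δ := by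
        have ht : Tendsto (fun s' => ‖Γ s' - Γ s‖) (𝓝 s) (𝓝 0) := by
          have := (hc.tendsto s).sub (tendsto_const_nhds (x := Γ s))
          simpa using this.norm
        exact ht.eventually (gt_mem_nhds hδ)
      filter_upwards [this] with s' hs'
      exact hst _ (hN s') ((hq _).trans_lt hs') hcl
  have : {s | Cl q N (Γ s)} = Set.univ := by
    refine hclopen.eq_univ ⟨0, ?_⟩
    intro ε hε
    exact ⟨1, by simp, by simpa [h0] using hε⟩
  intro s
  have := this ▸ Set.mem_univ s
  exact this

variable (q1 q2 q12 : RingSeminorm R)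

lemma cartan (h1le : ∀ x, q12 x ≤ q1 x) (N : Ideal R)
    (hsplit : ∀ x ∈ N, ∀ c, q12 x < c → ∃ x1 ∈ N, ∃ x2 ∈ N, x = x1 + x2 ∧ q1 x1 < c ∧ q2 x2 < c)
    (m : R) (hm : m ∈ N) (hqm : q12 m < 1 / 4) (t : ℝ) (ht : 0 < t) :
    ∃ u1 u2 : R, u1 - 1 ∈ N ∧ u2 - 1 ∈ N ∧ q1 (u1 - 1) ≤ 1 / 2 ∧ q2 (u2 - 1) ≤ 1 / 2 ∧
      q12 ((1 + m) * u1 - u2) < t := by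
  have hmain : ∀ j : ℕ, ∃ u1 u2 : R, u1 - 1 ∈ N ∧ u2 - 1 ∈ N ∧
      q1 (u1 - 1) ≤ 1 / 2 - (1 / 4) ^ j / 2 ∧ q2 (u2 - 1) ≤ 1 / 2 - (1 / 4) ^ j / 2 ∧
      q12 ((1 + m) * u1 - u2) < (1 / 4) ^ (j + 1) ∧ (1 + m) * u1 - u2 ∈ N := by
    intro j
    induction j with
    | zero => exact ⟨1, 1, by simp, by simp, by simp, by simp, by simpa using hqm, by simpa using hm⟩
    | succ j ih =>
      obtain ⟨u1, u2, hu1, hu2, hq1, hq2, hr, hrN⟩ := ih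
      obtain ⟨s1, hs1, s2, hs2, hsum, hqs1, hqs2⟩ := hsplit _ hrN _ hr
      have hid : (1 + m) * (u1 - s1) - (u2 + s2) = -(m * s1) := by
        have : (1 + m) * (u1 - s1) - (u2 + s2) = ((1 + m) * u1 - u2) - (s1 + s2) - m * s1 := by
          noncomm_ring
        rw [this, hsum]; abel
      have hpos : 0 < (1 / 4 : ℝ) ^ (j + 1) := by positivity
      refine ⟨u1 - s1, u2 + s2, ?_, ?_, ?_, ?_, ?_, ?_⟩
      · rw [sub_right_comm]; exact N.sub_mem hu1 hs1
      · rw [add_sub_right_comm]; exact N.add_mem hu2 hs2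
      · rw [sub_right_comm]
        refine (q_sub_le q1 _ _).trans ?_
        rw [pow_succ] at hqs1 hpos ⊢; linarith
      · rw [add_sub_right_comm]
        refine (map_add_le_add q2 _ _).trans ?_
        rw [pow_succ] at hqs2 hpos ⊢; linarith
      · rw [hid, map_neg_eq_map, pow_succ, mul_comm]
        refine (map_mul_le_mul q12 _ _).trans_lt ?_
        exact mul_lt_mul'' hqm ((h1le _).trans_lt hqs1) (apply_nonneg _ _) (apply_nonneg _ _)
      · rw [hid]; exact N.neg_mem (N.mul_mem_left _ hs1)
  obtain ⟨j, hj⟩ := exists_pow_lt_of_lt_one ht (show (1 / 4 : ℝ) < 1 by norm_num)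
  obtain ⟨u1, u2, hu1, hu2, hq1, hq2, hr, -⟩ := hmain j
  have hpos : 0 < (1 / 4 : ℝ) ^ j := by positivity
  refine ⟨u1, u2, hu1, hu2, by linarith, by linarith, hr.trans ?_⟩
  rw [pow_succ]; linarith

lemma linv_of_close (q : RingSeminorm R) (h1 : q 1 ≤ 1) (G y u s : R) (C t : ℝ)
    (hC : q y ≤ C) (hy : q (y * G - 1) < 1 / 8) (hu : q (u - 1) ≤ 1 / 2) (hs : q s ≤ t)
    (ht : C * t ≤ 1 / 8) : LInv q (G * u + s) := by
  refine ⟨y, ?_⟩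
  have hid : y * (G * u + s) - 1 = (y * G - 1) * u + (u - 1) + y * s := by noncomm_ring
  rw [hid]
  have a1 := map_add_le_add q ((y * G - 1) * u + (u - 1)) (y * s)
  have a2 := map_add_le_add q ((y * G - 1) * u) (u - 1)
  have a3 := map_mul_le_mul q (y * G - 1) u
  have a4 := map_mul_le_mul q y s
  have a5 : q u ≤ 3 / 2 := by
    have : u = (u - 1) + 1 := by abel
    rw [this]; refine (map_add_le_add q _ _).trans ?_; linarith
  have a6 : q (y * G - 1) * q u ≤ 1 / 8 * (3 / 2) :=
    mul_le_mul hy.le a5 (apply_nonneg _ _) (by norm_num)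
  have a7 : q y * q s ≤ C * t := mul_le_mul hC hs (apply_nonneg _ _) ((apply_nonneg q _).trans hC)
  linarith

lemma glue (h12 : ∀ x, q12 x ≤ ‖x‖) (h1le : ∀ x, q12 x ≤ q1 x) (h2le : ∀ x, q12 x ≤ q2 x)
    (o1 : q1 1 ≤ 1) (o2 : q2 1 ≤ 1) (hs : ∀ (c : ℝ) x, q12 (c • x) ≤ |c| * q12 x) (N : Ideal R)
    (hsplit : ∀ x ∈ N, ∀ c, q12 x < c → ∃ x1 ∈ N, ∃ x2 ∈ N, x = x1 + x2 ∧ q1 x1 < c ∧ q2 x2 < c)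
    (G1 G2 : R) (hG : G2 - G1 ∈ N) (hG1 : CInv q1 G1) (hG2 : CInv q2 G2)
    (hpath : ∀ h, h - 1 ∈ N → LInv q12 h → ∃ Γ : unitInterval → R, Continuous Γ ∧
      (∀ s, Γ s - 1 ∈ N) ∧ (∀ s, LInv q12 (Γ s)) ∧ Γ 0 = 1 ∧ Γ 1 = h) :
    ∃ G, G - G1 ∈ N ∧ LInv q1 G ∧ LInv q2 G := by
  have o12 : q12 1 ≤ 1 := (h1le _).trans o1
  obtain ⟨y1, hy1c, hy1⟩ := hG1
  obtain ⟨y2, hy2c, hy2⟩ := hG2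
  obtain ⟨C1, hC1, hI1⟩ := linv_improve q1 o1 G1 y1 hy1
  obtain ⟨C2, hC2, hI2⟩ := linv_improve q2 o2 G2 y2 hy2
  set K := G2 - G1 with hK
  have hqK := apply_nonneg q12 K
  -- the target precision for `G1 * E` versus `G2`
  set ε := 1 / (8 * C2) with hε
  have hεpos : 0 < ε := by positivity
  -- choose `y` inverse of `G1` with precision
  set ε1 := min (ε / (4 * (1 + q12 K))) (1 / (4 * C2 * (1 + q12 K))) with hε1
  have hε1pos : 0 < ε1 := by positivity
  obtain ⟨y, hyC, hyG, hyc⟩ := hI1 ε1 hε1pos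
  have hyc := hyc hy1c
  set h := 1 + y * K with hh
  have hhN : h - 1 ∈ N := by rw [hh, add_sub_cancel_left]; exact N.mul_mem_left _ hG
  have herr : G1 * h - G2 = (G1 * y - 1) * K := by rw [hh, hK]; noncomm_ring
  have herrq : q12 (G1 * h - G2) ≤ ε1 * q12 K := by
    rw [herr, ← hyc]
    exact (map_mul_le_mul q12 _ _).trans
      (mul_le_mul_of_nonneg_right ((h1le _).trans hyG.le) hqK)
  have hK1 : q12 K ≤ 1 + q12 K := by linarith
  have hb1 : ε1 * q12 K ≤ ε / 4 := by
    refine (mul_le_mul (min_le_left _ _) hK1 hqK (by positivity)).trans (le_of_eq ?_)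
    field_simp
  have hb2 : C2 * (ε1 * q12 K) ≤ 1 / 4 := by
    have : ε1 * q12 K ≤ 1 / (4 * C2) := by
      refine (mul_le_mul (min_le_right _ _) hK1 hqK (by positivity)).trans (le_of_eq ?_)
      field_simp
    refine (mul_le_mul_of_nonneg_left this hC2.le).trans (le_of_eq ?_)
    field_simp
  have hhL : LInv q12 h := by
    obtain ⟨z, hzC, hzG, -⟩ := hI2 (1 / 4) (by norm_num)
    refine ⟨z * G1, ?_⟩
    have : z * G1 * h - 1 = z * (G1 * h - G2) + (z * G2 - 1) := by noncomm_ring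
    rw [this]
    refine (map_add_le_add q12 _ _).trans_lt ?_
    have c1 : q12 (z * (G1 * h - G2)) ≤ C2 * (ε1 * q12 K) :=
      (map_mul_le_mul q12 _ _).trans
        (mul_le_mul ((h2le _).trans hzC) herrq (apply_nonneg _ _) hC2.le)
    have c2 := (h2le _).trans_lt hzG
    linarith
  obtain ⟨Γ, hΓc, hΓN, hΓL, hΓ0, hΓ1⟩ := hpath h hhN hhL
  have hcl : Cl q12 N h := hΓ1 ▸ cl_path q12 h12 o12 hs N Γ hΓc hΓN hΓL hΓ0 1
  have hqG1 := apply_nonneg q12 G1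
  obtain ⟨E, hE, hqE⟩ := hcl (ε / (4 * (1 + q12 G1))) (by positivity)
  set G1' := G1 * E with hG1'
  have hG1'N : G1' - G1 ∈ N := by
    have : G1' - G1 = G1 * (E - 1) := by rw [hG1']; noncomm_ring
    rw [this]; exact N.mul_mem_left _ hE
  set d := G1' - G2 with hd
  have hdN : d ∈ N := by
    have : d = (G1' - G1) - (G2 - G1) := by rw [hd]; abel
    rw [this]; exact N.sub_mem hG1'N hG
  have hqd : q12 d < ε := by
    have : d = (G1 * h - G2) - G1 * (h - E) := by rw [hd, hG1']; noncomm_ring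
    rw [this]
    refine (q_sub_le q12 _ _).trans_lt ?_
    have c1 : q12 (G1 * (h - E)) ≤ ε / 4 := by
      refine (map_mul_le_mul q12 _ _).trans ?_
      refine (mul_le_mul (by linarith : q12 G1 ≤ 1 + q12 G1) hqE.le (apply_nonneg _ _)
        (by positivity)).trans (le_of_eq ?_)
      field_simp
    linarith
  -- inverse of G1'
  have hG1'c : ∃ C > 0, ∃ z, q1 z ≤ C ∧ q1 (z * G1' - 1) < 1 / 8 := by
    have e0 : q1 ((↑E⁻¹ * y1 * G1') - 1) ≤ q1 (↑E⁻¹ : R) * (q1 (y1 * G1 - 1) * q1 (E : R)) := by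
      have : (↑E⁻¹ * y1 * G1') - 1 = ↑E⁻¹ * ((y1 * G1 - 1) * E) := by
        have hEE : (↑E⁻¹ : R) * E = 1 := E.inv_mul
        rw [hG1', sub_mul, mul_sub, one_mul, hEE]; noncomm_ring
      rw [this]
      refine (map_mul_le_mul q1 _ _).trans ?_
      exact mul_le_mul_of_nonneg_left (map_mul_le_mul q1 _ _) (apply_nonneg _ _)
    have n1 := apply_nonneg q1 (↑E⁻¹ : R)
    have n2 := apply_nonneg q1 (E : R)
    obtain ⟨w, hwC, hwG, -⟩ := hI1 (1 / (16 * (1 + q1 (↑E⁻¹ : R)) * (1 + q1 (E : R)))) (by positivity)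
    refine ⟨q1 (↑E⁻¹ * w) + 1, by have := apply_nonneg q1 (↑E⁻¹ * w); positivity, ↑E⁻¹ * w,
      by linarith, ?_⟩
    have : (↑E⁻¹ * w * G1') - 1 = ↑E⁻¹ * ((w * G1 - 1) * E) := by
      have hEE : (↑E⁻¹ : R) * E = 1 := E.inv_mul
      rw [hG1', sub_mul, mul_sub, one_mul, hEE]; noncomm_ring
    rw [this]
    refine (map_mul_le_mul q1 _ _).trans_lt ?_
    have b1 := map_mul_le_mul q1 (w * G1 - 1) (E : R)
    have b2 : q1 (w * G1 - 1) * q1 (E : R) ≤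
        1 / (16 * (1 + q1 (↑E⁻¹ : R)) * (1 + q1 (E : R))) * (1 + q1 (E : R)) :=
      mul_le_mul hwG.le (by linarith) n2 (by positivity)
    have b3 : q1 (↑E⁻¹ : R) * q1 ((w * G1 - 1) * E) ≤ (1 + q1 (↑E⁻¹ : R)) *
        (1 / (16 * (1 + q1 (↑E⁻¹ : R)) * (1 + q1 (E : R))) * (1 + q1 (E : R))) :=
      mul_le_mul (by linarith) (b1.trans b2) (apply_nonneg _ _) (by positivity)
    refine b3.trans_lt ?_
    have : (1 + q1 (↑E⁻¹ : R)) *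
        (1 / (16 * (1 + q1 (↑E⁻¹ : R)) * (1 + q1 (E : R))) * (1 + q1 (E : R))) = 1 / 16 := by
      field_simp
    rw [this]; norm_num
  obtain ⟨C1', hC1', z1, hz1C, hz1⟩ := hG1'c
  obtain ⟨z2, hz2C, hz2, -⟩ := hI2 (1 / 8) (by norm_num)
  set t := min (1 / (8 * C1')) (1 / (8 * C2)) with ht
  have htpos : 0 < t := by positivity
  have ht1 : C1' * t ≤ 1 / 8 := by
    refine (mul_le_mul_of_nonneg_left (min_le_left _ _) hC1'.le).trans (le_of_eq ?_)
    field_simp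
  have ht2 : C2 * t ≤ 1 / 8 := by
    refine (mul_le_mul_of_nonneg_left (min_le_right _ _) hC2.le).trans (le_of_eq ?_)
    field_simp
  have hqdn := apply_nonneg q12 d
  obtain ⟨y2', hy2'C, hy2'G, hy2'c⟩ := hI2 (t / (4 * (1 + q12 d))) (by positivity)
  have hy2'c := hy2'c hy2c
  set m := y2' * d with hm
  have hmN : m ∈ N := N.mul_mem_left _ hdN
  have hqm : q12 m < 1 / 4 := by
    refine (map_mul_le_mul q12 _ _).trans_lt ?_
    have : q12 y2' * q12 d ≤ C2 * ε :=
      mul_le_mul ((h2le _).trans hy2'C) hqd.le hqdn hC2.le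
    refine this.trans_lt ?_
    have : C2 * ε = 1 / 8 := by rw [hε]; field_simp
    rw [this]; norm_num
  have hqG2 := apply_nonneg q12 G2
  obtain ⟨u1, u2, hu1, hu2, hqu1, hqu2, hqr⟩ := cartan q1 q2 q12 h1le N hsplit m hmN hqm
    (t / (4 * (1 + q12 G2))) (by positivity)
  have hxN : G1' * u1 - G2 * u2 ∈ N := by
    have : G1' * u1 - G2 * u2 = G1' * (u1 - 1) - G2 * (u2 - 1) + d := by rw [hd]; noncomm_ring
    rw [this]
    exact N.add_mem (N.sub_mem (N.mul_mem_left _ hu1) (N.mul_mem_left _ hu2)) hdN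
  have hqx : q12 (G1' * u1 - G2 * u2) < t := by
    have : G1' * u1 - G2 * u2 = G2 * ((1 + m) * u1 - u2) - ((y2' * G2 - 1) * d) * u1 := by
      rw [hy2'c, hm, show G1' = d + G2 by rw [hd]; abel]; noncomm_ring
    rw [this]
    refine (q_sub_le q12 _ _).trans_lt ?_
    have c1 : q12 (G2 * ((1 + m) * u1 - u2)) ≤ t / 4 := by
      refine (map_mul_le_mul q12 _ _).trans ?_
      refine (mul_le_mul (by linarith : q12 G2 ≤ 1 + q12 G2) hqr.le (apply_nonneg _ _)
        (by positivity)).trans (le_of_eq ?_)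
      field_simp
    have c2 : q12 (((y2' * G2 - 1) * d) * u1) ≤ t / 4 * (3 / 2) := by
      refine (map_mul_le_mul q12 _ _).trans ?_
      refine mul_le_mul ?_ ?_ (apply_nonneg _ _) (by positivity)
      · refine (map_mul_le_mul q12 _ _).trans ?_
        refine (mul_le_mul ((h2le _).trans hy2'G.le) (by linarith : q12 d ≤ 1 + q12 d) hqdn
          (by positivity)).trans (le_of_eq ?_)
        field_simp
      · have : u1 = (u1 - 1) + 1 := by abel
        rw [this]; refine (map_add_le_add q12 _ _).trans ?_
        linarith [h1le (u1 - 1)]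
    linarith
  obtain ⟨s1, hs1, s2, hs2, hsum, hqs1, hqs2⟩ := hsplit _ hxN _ hqx
  have hGeq : G1' * u1 + (-s1) = G2 * u2 + s2 := by
    have : G1' * u1 = G2 * u2 + (s1 + s2) := by rw [← hsum]; abel
    rw [this]; abel
  refine ⟨G1' * u1 + (-s1), ?_, ?_, ?_⟩
  · have : G1' * u1 + (-s1) - G1 = G1' * (u1 - 1) + (G1' - G1) - s1 := by noncomm_ring
    rw [this]
    exact N.sub_mem (N.add_mem (N.mul_mem_left _ hu1) hG1'N) hs1
  · exact linv_of_close q1 o1 G1' z1 u1 (-s1) C1' t hz1C hz1 hqu1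
      (by rw [map_neg_eq_map]; exact hqs1.le) ht1
  · rw [hGeq]
    exact linv_of_close q2 o2 G2 z2 u2 s2 C2 t hz2C hz2 hqu2 hqs2.le ht2

end abs
end LinHermite


namespace LinHermite
set_option linter.unusedSectionVars false
open Filter Topology

section qM
variable {S R : Type*} [CommRing S] [NormedRing R] [Algebra S R]

/-- representations `x = ∑ m_i • c_i` with `∑ ‖c_i‖ ≤ r`. -/
inductive Rep (M : Submonoid S) : R → ℝ → Prop
  | zero (r : ℝ) : 0 ≤ r → Rep M 0 r
  | add (m : S) (c x : R) (r r' : ℝ) : m ∈ M → ‖c‖ + r ≤ r' → Rep M x r → Rep M (m • c + x) r'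

variable {M M' : Submonoid S}

lemma Rep.nonneg {x : R} {r : ℝ} (h : Rep M x r) : 0 ≤ r := by
  induction h with
  | zero r h => exact h
  | add m c x r r' hm hr h ih => have := norm_nonneg c; linarith

lemma Rep.of_mem {m : S} (hm : m ∈ M) (c : R) : Rep M (m • c) ‖c‖ := by
  have := Rep.add (M := M) m c 0 0 ‖c‖ hm (by simp) (Rep.zero 0 le_rfl)
  simpa using this

lemma Rep.of (c : R) : Rep M c ‖c‖ := by
  simpa using Rep.of_mem (M := M) M.one_mem c

lemma Rep.le {x : R} {r s : ℝ} (h : Rep M x r) (hrs : r ≤ s) : Rep M x s := by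
  cases h with
  | zero r h => exact Rep.zero _ (h.trans hrs)
  | add m c x r r' hm hr h => exact Rep.add m c x r s hm (hr.trans hrs) h

lemma Rep.mono (hM : M ≤ M') {x : R} {r : ℝ} (h : Rep M x r) : Rep M' x r := by
  induction h with
  | zero r h => exact Rep.zero _ h
  | add m c x r r' hm hr h ih => exact Rep.add m c x r r' (hM hm) hr ih

lemma Rep.add' {x y : R} {r s : ℝ} (h : Rep M x r) (h' : Rep M y s) : Rep M (x + y) (r + s) := by
  induction h with
  | zero r h => rw [zero_add]; exact h'.le (by linarith)
  | add m c x r r' hm hr h ih =>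
    rw [add_assoc]; exact Rep.add m c _ _ _ hm (by linarith) ih

lemma Rep.map {R' : Type*} [NormedRing R'] [Algebra S R'] (L : R →+ R') (k : ℝ)
    (hL : ∀ (m : S) c, L (m • c) = m • L c)
    (hn : ∀ c, ‖L c‖ ≤ k * ‖c‖) {x : R} {r : ℝ} (h : Rep M x r) (hk : 0 ≤ k) :
    Rep M (L x) (k * r) := by
  induction h with
  | zero r h => rw [map_zero]; exact Rep.zero _ (by positivity)
  | add m c x r r' hm hr h ih =>
    rw [map_add, hL]; refine Rep.add m _ _ _ _ hm ?_ ih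
    have := hn c
    nlinarith

lemma Rep.mul {x y : R} {r s : ℝ} (h : Rep M x r) (h' : Rep M y s) : Rep M (x * y) (r * s) := by
  induction h with
  | zero r h => rw [zero_mul]; exact Rep.zero _ (mul_nonneg h h'.nonneg)
  | add m c x r r' hm hr h ih =>
    rw [add_mul]
    have key : Rep M (m • c * y) (‖c‖ * s) := by
      clear ih
      induction h' with
      | zero s hs => rw [mul_zero]; exact Rep.zero _ (by positivity)
      | add m2 c2 y s s' hm2 hs h' ih2 =>
        rw [mul_add, smul_mul_smul_comm]
        refine Rep.add _ _ _ _ _ (M.mul_mem hm hm2) ?_ ih2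
        have := norm_mul_le c c2
        have := norm_nonneg c
        nlinarith
    exact (key.add' ih).le (by nlinarith [h'.nonneg])

lemma rep_bdd (x : R) : BddBelow {r | Rep M x r} := ⟨0, fun _ h => h.nonneg⟩

lemma rep_le {x : R} {r : ℝ} (h : Rep M x r) : sInf {r | Rep M x r} ≤ r :=
  csInf_le (rep_bdd x) h

lemma rep_of_lt {x : R} {c : ℝ} (h : sInf {r | Rep M x r} < c) : Rep M x c := by
  obtain ⟨r, hr, hrc⟩ := exists_lt_of_csInf_lt ⟨_, Rep.of x⟩ h
  exact Rep.le hr hrc.le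

variable (R M) in
/-- the seminorm attached to a submonoid. -/
noncomputable def qM : RingSeminorm R where
  toFun x := sInf {r | Rep M x r}
  map_zero' := le_antisymm (rep_le (Rep.zero 0 le_rfl))
    (le_csInf ⟨_, Rep.of 0⟩ fun _ h => h.nonneg)
  add_le' x y := by
    refine le_of_forall_pos_lt_add fun ε hε => ?_
    have hx : Rep M x (sInf {r | Rep M x r} + ε / 4) := rep_of_lt (by linarith)
    have hy : Rep M y (sInf {r | Rep M y r} + ε / 4) := rep_of_lt (by linarith)
    have := rep_le (hx.add' hy)
    linarith
  neg' x := by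
    congr 1
    ext r
    have : ∀ x : R, Rep M x r → Rep M (-x) r := fun x h => by
      simpa using Rep.map (-AddMonoidHom.id R) 1 (by simp) (by simp) h zero_le_one
    exact ⟨fun h => by simpa using this _ h, this x⟩
  mul_le' x y := by
    have h0 : ∀ x : R, 0 ≤ sInf {r | Rep M x r} := fun x =>
      le_csInf ⟨_, Rep.of x⟩ fun _ h => h.nonneg
    have : Tendsto (fun ε : ℝ => (sInf {r | Rep M x r} + ε) * (sInf {r | Rep M y r} + ε))
        (𝓝[>] 0) (𝓝 ((sInf {r | Rep M x r} + 0) * (sInf {r | Rep M y r} + 0))) := by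
      apply Tendsto.mono_left _ nhdsWithin_le_nhds
      apply Continuous.tendsto (f := fun ε : ℝ => (sInf {r | Rep M x r} + ε) * (sInf {r | Rep M y r} + ε))
      fun_prop
    rw [add_zero, add_zero] at this
    refine ge_of_tendsto this ?_
    filter_upwards [self_mem_nhdsWithin] with ε hε
    have hε : 0 < ε := hε
    exact rep_le ((rep_of_lt (by linarith)).mul (rep_of_lt (by linarith)))

lemma qM_le {x : R} {r : ℝ} (h : Rep M x r) : qM R M x ≤ r := rep_le h

lemma rep_of_qM_lt {x : R} {c : ℝ} (h : qM R M x < c) : Rep M x c := rep_of_lt h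

lemma qM_le_norm (x : R) : qM R M x ≤ ‖x‖ := qM_le (Rep.of x)

lemma qM_anti (hM : M ≤ M') (x : R) : qM R M' x ≤ qM R M x :=
  le_csInf ⟨_, Rep.of x⟩ fun _ h => qM_le (Rep.mono hM h)

lemma qM_map {R' : Type*} [NormedRing R'] [Algebra S R'] (L : R →+ R') (k : ℝ) (hk : 0 ≤ k)
    (hL : ∀ (m : S) c, L (m • c) = m • L c)
    (hn : ∀ c, ‖L c‖ ≤ k * ‖c‖) (x : R) : qM R' M (L x) ≤ k * qM R M x := by
  refine le_of_forall_pos_lt_add fun ε hε => ?_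
  have hx : Rep M x (qM R M x + ε / (2 * (k + 1))) :=
    rep_of_qM_lt (by have : 0 < ε / (2 * (k + 1)) := by positivity
                     linarith)
  have := qM_le (Rep.map L k hL hn hx hk)
  have h2 : k * (ε / (2 * (k + 1))) < ε := by
    rw [← mul_div_assoc, div_lt_iff₀ (by positivity)]
    nlinarith
  linarith

lemma qM_smul {k : Type*} [NormedField k] [NormedSpace k R] [SMulCommClass k S R]
    (c : k) (x : R) : qM R M (c • x) ≤ ‖c‖ * qM R M x :=
  qM_map (DistribSMul.toAddMonoidHom R c) ‖c‖ (norm_nonneg c) (fun m x => smul_comm c m x)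
    (fun x => (norm_smul c x).le) x

lemma norm_le_qM {R' : Type*} [NormedRing R'] [NormedSpace ℂ R'] (f : R →+ R') (φ : S → ℂ)
    (hφ : ∀ m ∈ M, ‖φ m‖ ≤ 1) (hf : ∀ m c, f (m • c) = φ m • f c) (hn : ∀ c, ‖f c‖ ≤ ‖c‖)
    (x : R) : ‖f x‖ ≤ qM R M x := by
  refine le_csInf ⟨_, Rep.of x⟩ fun r h => ?_
  replace h : Rep M x r := h
  induction h with
  | zero r h => simpa using h
  | add m c x r r' hm hr h ih =>
    rw [map_add, hf]
    have := norm_add_le (φ m • f c) (f x)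
    have h2 := ih
    rw [norm_smul] at this
    have := hφ m hm
    have := hn c
    have := norm_nonneg (f c)
    nlinarith

end qM

section spectral

/-- type synonym carrying the seminorm -/
def QS {S : Type*} [CommRing S] (_q : RingSeminorm S) : Type _ := S

variable {S : Type*} [NormedCommRing S] [NormedAlgebra ℂ S]

instance (q : RingSeminorm S) : CommRing (QS q) := inferInstanceAs (CommRing S)

noncomputable instance (q : RingSeminorm S) : SeminormedCommRing (QS q) :=
  { RingSeminorm.toSeminormedRing (R := QS q) q with
    mul_comm := fun x y => mul_comm x y }

lemma QS_norm (q : RingSeminorm S) (x : S) : ‖(show QS q from x)‖ = q x := rfl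

noncomputable instance (M : Submonoid S) : Algebra ℂ (QS (qM S M)) :=
  inferInstanceAs (Algebra ℂ S)

noncomputable instance (M : Submonoid S) : NormedAlgebra ℂ (QS (qM S M)) where
  norm_smul_le := fun c x => qM_smul (R := S) (M := M) c x

/-- identity map to the synonym -/
noncomputable def toQ (M : Submonoid S) : S →ₐ[ℂ] QS (qM S M) := AlgHom.id ℂ S

lemma norm_toQ (M : Submonoid S) (x : S) : ‖toQ M x‖ = qM S M x := rfl

lemma toQ_surj (M : Submonoid S) : Function.Surjective (toQ M) := fun x => ⟨x, rfl⟩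

/-- map to the completion -/
noncomputable def toC (M : Submonoid S) : S →ₐ[ℂ] UniformSpace.Completion (QS (qM S M)) :=
  AlgHom.comp (R := ℂ) (B := QS (qM S M))
    { (UniformSpace.Completion.coeRingHom (α := QS (qM S M))) with commutes' := fun _ => rfl } (toQ M)

lemma toC_apply (M : Submonoid S) (x : S) :
    toC M x = ((toQ M x : QS (qM S M)) : UniformSpace.Completion (QS (qM S M))) := rfl

lemma norm_toC (M : Submonoid S) (x : S) : ‖toC M x‖ = qM S M x := by
  rw [toC_apply, UniformSpace.Completion.norm_coe, norm_toQ]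

lemma toC_dense (M : Submonoid S) : DenseRange (toC M) :=
  (UniformSpace.Completion.denseRange_coe (α := QS (qM S M))).comp
    (toQ_surj M).denseRange (UniformSpace.Completion.continuous_coe _)

theorem spectral (M : Submonoid S) (h1 : ‖(1 : S)‖ ≤ 1) (d : S)
    (hd : ∀ χ : S →ₐ[ℂ] ℂ, (∀ m ∈ M, ‖χ m‖ ≤ 1) → χ d ≠ 0) : ∃ e, qM S M (d * e - 1) < 1 := by
  by_cases hu : IsUnit (toC M d)
  · obtain ⟨e', he'⟩ := hu.exists_right_inv
    have hopen : IsOpen {x : UniformSpace.Completion (QS (qM S M)) | ‖toC M d * x - 1‖ < 1} :=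
      isOpen_lt (by fun_prop) continuous_const
    obtain ⟨e, he⟩ := (toC_dense M).exists_mem_open hopen ⟨e', by simp [he']⟩
    refine ⟨e, ?_⟩
    rw [← norm_toC, map_sub, map_mul, map_one]
    exact he
  · exfalso
    obtain ⟨f, hf⟩ := WeakDual.CharacterSpace.exists_apply_eq_zero hu
    let F := WeakDual.CharacterSpace.toAlgHom f
    refine hd (F.comp (toC M)) (fun m hm => ?_) hf
    have hm1 : qM S M m ≤ 1 := by
      have := qM_le (Rep.of_mem hm (1 : S))
      rw [smul_eq_mul, mul_one] at this
      exact this.trans h1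
    have h2 := AlgHom.norm_apply_le_self_mul_norm_one F (toC M m)
    have h3 : ‖(1 : UniformSpace.Completion (QS (qM S M)))‖ ≤ 1 := by
      rw [← map_one (toC M), norm_toC]; exact (qM_le_norm _).trans h1
    rw [norm_toC] at h2
    calc ‖F.comp (toC M) m‖ ≤ _ := h2
      _ ≤ 1 * 1 := mul_le_mul hm1 h3 (norm_nonneg _) zero_le_one
      _ = 1 := one_mul 1

end spectral
end LinHermite


namespace LinHermite
set_option linter.unusedSectionVars false
open Filter Topology
open scoped Matrix.Norms.Operator

section mat
variable {S : Type*} [NormedCommRing S] [NormedAlgebra ℂ S]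
variable {ι : Type*} [Fintype ι] [DecidableEq ι]

lemma norm_scalar_le (c : S) : ‖Matrix.scalar ι c‖ ≤ 1 * ‖c‖ := by
  rw [Matrix.scalar_apply, Matrix.linfty_opNorm_diagonal, one_mul]
  exact (pi_norm_le_iff_of_nonneg (norm_nonneg _)).2 fun _ => le_rfl

lemma mat_norm_one (h1 : ‖(1 : S)‖ ≤ 1) : ‖(1 : Matrix ι ι S)‖ ≤ 1 := by
  have := norm_scalar_le (ι := ι) (1 : S)
  rw [map_one] at this
  linarith

lemma mat_cinv (M : Submonoid S) (h1 : ‖(1 : S)‖ ≤ 1) (G : Matrix ι ι S)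
    (hd : ∀ χ : S →ₐ[ℂ] ℂ, (∀ m ∈ M, ‖χ m‖ ≤ 1) → (χ.mapMatrix G).det ≠ 0) :
    CInv (qM (Matrix ι ι S) M) G := by
  obtain ⟨e, he⟩ := spectral M h1 G.det (fun χ hχ => by
    rw [AlgHom.map_det]; exact hd χ hχ)
  refine ⟨e • G.adjugate, ?_, ?_⟩
  · rw [Matrix.smul_mul, Matrix.mul_smul, Matrix.adjugate_mul, Matrix.mul_adjugate]
  · have : e • G.adjugate * G - 1 = Matrix.scalar ι (G.det * e - 1) := by
      rw [Matrix.smul_mul, Matrix.adjugate_mul, map_sub, map_one, smul_smul, mul_comm,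
        Matrix.scalar_apply, Matrix.smul_one_eq_diagonal]
    rw [this]
    have := qM_map (M := M) (R := S) (R' := Matrix ι ι S) (Matrix.scalar ι).toAddMonoidHom 1
      zero_le_one (fun m c => by
        ext i j
        simp [Matrix.diagonal_apply]) (fun c => norm_scalar_le c) (G.det * e - 1)
    exact this.trans_lt (by simpa using he)

lemma det_ne_of_linv (M : Submonoid S) (χ : S →ₐ[ℂ] ℂ) (hn : ∀ x, ‖χ x‖ ≤ ‖x‖)
    (hm : ∀ m ∈ M, ‖χ m‖ ≤ 1) (G : Matrix ι ι S) (hG : LInv (qM (Matrix ι ι S) M) G) :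
    (χ.mapMatrix G).det ≠ 0 := by
  obtain ⟨y, hy⟩ := hG
  have h := norm_le_qM (M := M) (R := Matrix ι ι S) (R' := Matrix ι ι ℂ)
    (χ.mapMatrix (m := ι)).toRingHom.toAddMonoidHom χ hm (fun m c => by
      ext i j
      simp) (fun c => by
      change ‖χ.mapMatrix c‖ ≤ _
      rw [← coe_nnnorm, ← coe_nnnorm, NNReal.coe_le_coe, Matrix.linfty_opNNNorm_def,
        Matrix.linfty_opNNNorm_def]
      refine Finset.sup_mono_fun fun i _ => Finset.sum_le_sum fun j _ => ?_
      exact hn _) (y * G - 1)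
  have h2 : ‖χ.mapMatrix y * χ.mapMatrix G - 1‖ < 1 := by
    have h3 : χ.mapMatrix (y * G - 1) = χ.mapMatrix y * χ.mapMatrix G - 1 := by
      rw [map_sub, map_mul, map_one]
    rw [← h3]
    exact h.trans_lt hy
  intro h0
  have hu : IsUnit (χ.mapMatrix y * χ.mapMatrix G) := by
    have := isUnit_one_sub_of_norm_lt_one (x := 1 - χ.mapMatrix y * χ.mapMatrix G)
      (by rwa [norm_sub_rev])
    simpa using this
  rw [Matrix.isUnit_iff_isUnit_det, Matrix.det_mul, h0, mul_zero] at hu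
  simp at hu

end mat
end LinHermite


namespace LinHermite
set_option linter.unusedSectionVars false
open Filter Topology
open scoped Matrix.Norms.Operator

lemma char_CK {X : Type*} [TopologicalSpace X] [CompactSpace X] [T2Space X]
    (χ : C(X, ℂ) →ₐ[ℂ] ℂ) : ∃ x, ∀ f, χ f = f x := by
  obtain ⟨x, hx⟩ := (WeakDual.CharacterSpace.continuousMapEval_bijective (X := X) (𝕜 := ℂ)).2
    (WeakDual.CharacterSpace.equivAlgHom.symm χ)
  refine ⟨x, fun f => ?_⟩
  have := congrArg (fun φ => φ f) hx
  simpa using this.symm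

/-- a uniform algebra all of whose characters are point evaluations -/
structure Uni (K : Type*) [TopologicalSpace K] [CompactSpace K] where
  /-- the algebra -/
  alg : Subalgebra ℂ C(K, ℂ)
  closed : IsClosed (alg : Set C(K, ℂ))
  chars : ∀ χ : alg →ₐ[ℂ] ℂ, ∃ z, ∀ a : alg, χ a = (a : C(K, ℂ)) z

section B
variable {K : Type*} [TopologicalSpace K] [CompactSpace K] [T2Space K]
variable {T : Type*} [TopologicalSpace T] [CompactSpace T] [T2Space T]

/-- inclusion of a slice -/
def inc (K : Type*) [TopologicalSpace K] {T : Type*} [TopologicalSpace T] (s : T) : C(K, T × K) :=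
  ⟨fun z => (s, z), by fun_prop⟩

/-- functions on `T × K` whose slices over `T0` are in the algebra -/
def BT (U : Uni K) (T0 : Set T) : Subalgebra ℂ C(T × K, ℂ) where
  carrier := {f | ∀ s ∈ T0, f.comp (inc K s) ∈ U.alg}
  mul_mem' := fun ha hb s hs => U.alg.mul_mem (ha s hs) (hb s hs)
  add_mem' := fun ha hb s hs => U.alg.add_mem (ha s hs) (hb s hs)
  algebraMap_mem' := fun c _ _ => U.alg.algebraMap_mem c

variable {U : Uni K} {T0 : Set T}

lemma BT_closed : IsClosed (BT U T0 : Set C(T × K, ℂ)) := by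
  have : (BT U T0 : Set C(T × K, ℂ)) =
      ⋂ s ∈ T0, (fun f : C(T × K, ℂ) => f.comp (inc K s)) ⁻¹' (U.alg : Set C(K, ℂ)) := by
    ext f
    simp only [Set.mem_iInter]
    rfl
  rw [this]
  exact isClosed_biInter fun s _ => U.closed.preimage (ContinuousMap.continuous_precomp _)

/-- the Banach algebra `BT` as an opaque-ish type. -/
def BA (U : Uni K) (T0 : Set T) : Type _ := BT U T0

noncomputable instance : NormedCommRing (BA U T0) := inferInstanceAs (NormedCommRing (BT U T0))
noncomputable instance : NormedAlgebra ℂ (BA U T0) := inferInstanceAs (NormedAlgebra ℂ (BT U T0))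
instance : CompleteSpace (BA U T0) := BT_closed.completeSpace_coe

/-- underlying function -/
noncomputable def BA.fn : BA U T0 →ₐ[ℂ] C(T × K, ℂ) := (BT U T0).val

/-- constructor -/
def BA.mk (f : C(T × K, ℂ)) (hf : ∀ s ∈ T0, f.comp (inc K s) ∈ U.alg) : BA U T0 :=
  (⟨f, hf⟩ : BT U T0)

@[simp] lemma BA.fn_mk (f : C(T × K, ℂ)) (hf : ∀ s ∈ T0, f.comp (inc K s) ∈ U.alg) :
    (BA.mk f hf).fn = f := rfl

lemma BA.fn_mem (f : BA U T0) (s : T) (hs : s ∈ T0) : f.fn.comp (inc K s) ∈ U.alg :=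
  (show BT U T0 from f).2 s hs

lemma BA.norm_def (f : BA U T0) : ‖f‖ = ‖f.fn‖ := rfl

lemma BA.ext {f g : BA U T0} (h : ∀ p, f.fn p = g.fn p) : f = g :=
  Subtype.ext (ContinuousMap.ext h)

lemma BA.norm_le (f : BA U T0) {c : ℝ} (hc : 0 ≤ c) (h : ∀ p, ‖f.fn p‖ ≤ c) : ‖f‖ ≤ c := by
  rw [BA.norm_def]; exact (ContinuousMap.norm_le _ hc).2 h

lemma BT_norm_one : ‖(1 : BA U T0)‖ ≤ 1 :=
  BA.norm_le _ zero_le_one fun p => by simp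

/-- evaluation at a point -/
noncomputable def ev (U : Uni K) (T0 : Set T) (p : T × K) : BA U T0 →ₐ[ℂ] ℂ :=
  (ContinuousMap.evalAlgHom ℂ ℂ p).comp BA.fn

lemma ev_apply (p : T × K) (f : BA U T0) : ev U T0 p f = f.fn p := rfl

lemma ev_norm (p : T × K) (f : BA U T0) : ‖ev U T0 p f‖ ≤ ‖f‖ :=
  ContinuousMap.norm_coe_le_norm f.fn p

/-- functions of `T` -/
noncomputable def ofT (U : Uni K) (T0 : Set T) : C(T, ℂ) →ₐ[ℂ] BA U T0 :=
  (ContinuousMap.compRightAlgHom ℂ ℂ (ContinuousMap.fst : C(T × K, T))).codRestrict (BT U T0)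
    (fun f s _ => U.alg.algebraMap_mem (f s))

lemma ofT_apply (f : C(T, ℂ)) (p : T × K) : (ofT U T0 f).fn p = f p.1 := rfl

/-- functions of `K` -/
noncomputable def ofA (U : Uni K) (T0 : Set T) : U.alg →ₐ[ℂ] BA U T0 :=
  ((ContinuousMap.compRightAlgHom ℂ ℂ (ContinuousMap.snd : C(T × K, K))).comp
    U.alg.val).codRestrict (BT U T0) (fun f _ _ => f.2)

lemma ofA_apply (f : U.alg) (p : T × K) : (ofA U T0 f).fn p = (f : C(K, ℂ)) p.2 := rfl

/-- slice norm -/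
noncomputable def sn (f : C(T × K, ℂ)) : C(T, ℝ) := ⟨fun s => ‖f.curry s‖, by fun_prop⟩

lemma le_sn (f : C(T × K, ℂ)) (p : T × K) : ‖f p‖ ≤ sn f p.1 :=
  ContinuousMap.norm_coe_le_norm (f.curry p.1) p.2

lemma sn_nonneg (f : C(T × K, ℂ)) (s : T) : 0 ≤ sn f s := norm_nonneg (f.curry s)

lemma sn_eq_zero (f : C(T × K, ℂ)) (s : T) (h : ∀ z, f (s, z) = 0) : sn f s = 0 := by
  change ‖f.curry s‖ = 0
  rw [norm_eq_zero]; ext z; exact h z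

/-- cutoff function `ε / (ε + g)` -/
noncomputable def cut (g : C(T, ℝ)) (hg : ∀ s, 0 ≤ g s) (ε : ℝ) (hε : 0 < ε) : C(T, ℂ) :=
  ⟨fun s => ((ε / (ε + g s) : ℝ) : ℂ), by
    refine Complex.continuous_ofReal.comp (Continuous.div (by fun_prop) (by fun_prop) fun s => ?_)
    have := hg s
    positivity⟩

lemma cut_apply (g : C(T, ℝ)) (hg : ∀ s, 0 ≤ g s) (ε : ℝ) (hε : 0 < ε) (s : T) :
    cut g hg ε hε s = ((ε / (ε + g s) : ℝ) : ℂ) := rfl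

lemma cut_norm (g : C(T, ℝ)) (hg : ∀ s, 0 ≤ g s) (ε : ℝ) (hε : 0 < ε) (s : T) (c : ℂ)
    (hc : ‖c‖ ≤ g s) : ‖cut g hg ε hε s * c‖ ≤ ε := by
  have := hg s
  rw [norm_mul, cut_apply, Complex.norm_real, Real.norm_eq_abs, abs_of_nonneg (by positivity),
    div_mul_eq_mul_div, div_le_iff₀ (by positivity)]
  nlinarith

lemma char_zero (χ : BA U T0 →ₐ[ℂ] ℂ) (s : T) (hs : ∀ f, χ (ofT U T0 f) = f s) (f : BA U T0)
    (hf : ∀ z, f.fn (s, z) = 0) : χ f = 0 := by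
  have key : ∀ ε : ℝ, 0 < ε → ‖χ f‖ ≤ ε := by
    intro ε hε
    set ρ := cut (sn f.fn) (sn_nonneg _) ε hε with hρ
    have h1 : χ (ofT U T0 ρ * f) = χ f := by
      rw [map_mul, hs, hρ, cut_apply, sn_eq_zero _ _ hf]
      simp [hε.ne']
    rw [← h1]
    refine (AlgHom.norm_apply_le_self_mul_norm_one χ _).trans ?_
    have h2 : ‖ofT U T0 ρ * f‖ ≤ ε := by
      refine BA.norm_le _ hε.le fun p => ?_
      exact cut_norm (sn f.fn) (sn_nonneg _) ε hε _ _ (le_sn _ p)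
    calc _ ≤ ε * 1 := mul_le_mul h2 BT_norm_one (norm_nonneg _) hε.le
      _ = ε := mul_one ε
  have := le_of_forall_pos_le_add (a := ‖χ f‖) (b := 0) (fun ε hε => by simpa using key ε hε)
  exact norm_le_zero_iff.1 this

theorem char_BT (hT0 : IsClosed T0) (χ : BA U T0 →ₐ[ℂ] ℂ) : ∃ p, ∀ f, χ f = ev U T0 p f := by
  obtain ⟨s, hs⟩ := char_CK (χ.comp (ofT U T0))
  by_cases hsT : s ∈ T0
  · obtain ⟨z, hz⟩ := U.chars (χ.comp (ofA U T0))
    refine ⟨(s, z), fun f => ?_⟩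
    have h0 := char_zero χ s hs (f - ofA U T0 ⟨_, f.fn_mem s hsT⟩) (fun z' => by
      change f.fn (s, z') - f.fn (s, z') = 0
      exact sub_self _)
    rw [map_sub, sub_eq_zero] at h0
    rw [h0]; exact hz _
  · obtain ⟨ρ, hρ0, hρ1, -⟩ := exists_continuous_zero_one_of_isClosed hT0
      (isClosed_singleton (x := s)) (Set.disjoint_singleton_right.2 hsT)
    let P : C(K, ℂ) → BA U T0 := fun g =>
      BA.mk ⟨fun p => (ρ p.1 : ℂ) * g p.2, by fun_prop⟩ fun s' hs' => by
        convert U.alg.zero_mem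
        ext z
        change (ρ s' : ℂ) * g z = 0
        rw [hρ0 hs']; simp
    have hP : ∀ g p, (P g).fn p = (ρ p.1 : ℂ) * g p.2 := fun _ _ => rfl
    have hρs : ρ s = 1 := hρ1 rfl
    have hz : ∀ f g : BA U T0, (∀ z, f.fn (s, z) = g.fn (s, z)) →
        χ f = χ g := fun f g h => by
      rw [← sub_eq_zero, ← map_sub]
      refine char_zero χ s hs _ fun z => ?_
      change f.fn (s, z) - g.fn (s, z) = 0
      rw [h, sub_self]
    let ψ : C(K, ℂ) →ₐ[ℂ] ℂ :=
      { toFun := fun g => χ (P g)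
        map_one' := by rw [← map_one χ]; apply hz; intro z; rw [hP, hρs]; simp
        map_mul' := fun a b => by
          rw [← map_mul]; apply hz; intro z
          change (P (a * b)).fn (s, z) =
            (P a).fn (s, z) * (P b).fn (s, z)
          rw [hP, hP, hP, hρs]; simp
        map_zero' := by rw [← map_zero χ]; apply hz; intro z; rw [hP, hρs]; simp
        map_add' := fun a b => by
          rw [← map_add]; apply hz; intro z
          change (P (a + b)).fn (s, z) =
            (P a).fn (s, z) + (P b).fn (s, z)
          rw [hP, hP, hP, hρs]; simp
        commutes' := fun c => by
          rw [← χ.commutes c]; apply hz; intro z; rw [hP, hρs]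
          change ((1 : ℝ) : ℂ) * c = c
          simp }
    obtain ⟨z, hz'⟩ := char_CK ψ
    refine ⟨(s, z), fun f => ?_⟩
    have := hz' (f.fn.comp (inc K s))
    change χ (P _) = f.fn (s, z) at this
    rw [ev_apply, ← this]
    apply hz; intro z'
    rw [hP, hρs]
    change _ = ((1 : ℝ) : ℂ) * f.fn (s, z')
    simp

end B

section N
variable {K : Type*} [TopologicalSpace K] [CompactSpace K] [T2Space K]
variable {T : Type*} [TopologicalSpace T] [CompactSpace T] [T2Space T]
variable {U : Uni K} {T0 : Set T}
variable {ι : Type*} [Fintype ι] [DecidableEq ι]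

/-- matrices vanishing in the columns `fx` and over `J`. -/
def NI (U : Uni K) (T0 : Set T) (fx : Set ι) (J : Set T) : Ideal (Matrix ι ι (BA U T0)) where
  carrier := {x | ∀ i j p, (j ∈ fx ∨ p.1 ∈ J) → ev U T0 p (x i j) = 0}
  zero_mem' := fun i j p _ => map_zero _
  add_mem' := fun ha hb i j p h => by rw [Matrix.add_apply, map_add, ha i j p h, hb i j p h, add_zero]
  smul_mem' := fun c x hx i j p h => by
    rw [smul_eq_mul, Matrix.mul_apply, map_sum]
    refine Finset.sum_eq_zero fun k _ => ?_
    rw [map_mul, hx k j p h, mul_zero]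

variable {fx : Set ι} {J : Set T}

lemma mem_NI {x : Matrix ι ι (BA U T0)} :
    x ∈ NI U T0 fx J ↔ ∀ i j p, (j ∈ fx ∨ p.1 ∈ J) → ev U T0 p (x i j) = 0 := Iff.rfl

lemma mat_norm_le (x : Matrix ι ι (BA U T0)) (ε : ℝ) (hε : 0 ≤ ε)
    (h : ∀ i j p, ‖ev U T0 p (x i j)‖ ≤ ε) : ‖x‖ ≤ Fintype.card ι * ε := by
  have hx : ∀ i j, ‖x i j‖ ≤ ε := fun i j => BA.norm_le _ hε (h i j)
  lift ε to NNReal using hε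
  rw [← coe_nnnorm, Matrix.linfty_opNNNorm_def]
  have : (Finset.univ.sup fun i => ∑ j, ‖x i j‖₊) ≤ Fintype.card ι * ε := by
    refine Finset.sup_le fun i _ => ?_
    refine (Finset.sum_le_card_nsmul _ _ ε fun j _ => ?_).trans ?_
    · exact_mod_cast hx i j
    · simp
  exact_mod_cast this

lemma rep_split {M1 M2 M12 : Submonoid (BA U T0)} (hM : ∀ m ∈ M12, m ∈ M1 ∨ m ∈ M2)
    {x : Matrix ι ι (BA U T0)} {r : ℝ} (h : Rep M12 x r) :
    ∃ x1 x2, x = x1 + x2 ∧ Rep M1 x1 r ∧ Rep M2 x2 r := by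
  induction h with
  | zero r h => exact ⟨0, 0, by simp, Rep.zero _ h, Rep.zero _ h⟩
  | add m c x r r' hm hr h ih =>
    obtain ⟨x1, x2, hx, h1, h2⟩ := ih
    have hc := norm_nonneg c
    rcases hM m hm with h' | h'
    · exact ⟨m • c + x1, x2, by rw [hx, add_assoc], Rep.add m c x1 r r' h' hr h1, h2.le (by linarith)⟩
    · exact ⟨x1, m • c + x2, by rw [hx]; abel, h1.le (by linarith), Rep.add m c x2 r r' h' hr h2⟩

open Classical in
/-- multiply by a function and kill columns -/
noncomputable def LL (U : Uni K) (T0 : Set T) (fx : Set ι) (θ : BA U T0) :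
    Matrix ι ι (BA U T0) →+ Matrix ι ι (BA U T0) where
  toFun x := Matrix.of fun i j => if j ∈ fx then 0 else θ * x i j
  map_zero' := by ext i j; simp
  map_add' x y := by
    ext i j : 2
    simp only [Matrix.of_apply, Matrix.add_apply]
    split_ifs
    · simp
    · ring

open Classical in
lemma LL_apply (θ : BA U T0) (x : Matrix ι ι (BA U T0)) (i j : ι) :
    LL U T0 fx θ x i j = if j ∈ fx then 0 else θ * x i j := rfl

theorem split {M1 M2 M12 : Submonoid (BA U T0)} (hM : ∀ m ∈ M12, m ∈ M1 ∨ m ∈ M2)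
    (x : Matrix ι ι (BA U T0)) (hx : x ∈ NI U T0 fx J) (c : ℝ)
    (hc : qM (Matrix ι ι (BA U T0)) M12 x < c) :
    ∃ x1 ∈ NI U T0 fx J, ∃ x2 ∈ NI U T0 fx J, x = x1 + x2 ∧
      qM (Matrix ι ι (BA U T0)) M1 x1 < c ∧ qM (Matrix ι ι (BA U T0)) M2 x2 < c := by
  obtain ⟨r, hr, hrc⟩ := exists_between hc
  obtain ⟨x1, x2, hxx, h1, h2⟩ := rep_split hM (rep_of_qM_lt hr)
  set ε : ℝ := (c - r) / (Fintype.card ι + 1) with hεd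
  have hε : 0 < ε := by have : 0 < c - r := by linarith
                        positivity
  let g : C(T, ℝ) := ∑ i, ∑ j, sn (x i j).fn
  have hgs : ∀ s, g s = ∑ i, ∑ j, sn (x i j).fn s := fun s => by simp [g]
  have hg : ∀ s, 0 ≤ g s := fun s => by
    rw [hgs]; exact Finset.sum_nonneg fun i _ => Finset.sum_nonneg fun j _ => sn_nonneg _ _
  have hgle : ∀ i j p, ‖ev U T0 p (x i j)‖ ≤ g p.1 := fun i j p => by
    refine (le_sn _ p).trans ?_
    rw [hgs]
    refine le_trans ?_ (Finset.single_le_sum (f := fun i => ∑ j, sn (x i j).fn p.1)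
      (fun i _ => Finset.sum_nonneg fun j _ => sn_nonneg _ _) (Finset.mem_univ i))
    exact Finset.single_le_sum (f := fun j => sn (x i j).fn p.1)
      (fun j _ => sn_nonneg _ _) (Finset.mem_univ j)
  have hgJ : ∀ s ∈ J, g s = 0 := fun s hs => by
    rw [hgs]
    refine Finset.sum_eq_zero fun i _ => Finset.sum_eq_zero fun j _ => sn_eq_zero _ _ fun z => ?_
    exact hx i j (s, z) (Or.inr hs)
  let ρ : BA U T0 := ofT U T0 (cut g hg ε hε)
  have hρ : ∀ p, ev U T0 p ρ = cut g hg ε hε p.1 := fun p => rfl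
  have hLN : ∀ y, LL U T0 fx (1 - ρ) y ∈ NI U T0 fx J := by
    intro y i j p h
    rw [LL_apply]
    split_ifs with hj
    · simp
    · have hp := h.resolve_left hj
      rw [map_mul, map_sub, map_one, hρ, cut_apply, hgJ _ hp]
      simp [hε.ne']
  have hθ : ‖(1 - ρ : BA U T0)‖ ≤ 1 := by
    refine BA.norm_le _ zero_le_one fun p => ?_
    change ‖(1 : ℂ) - cut g hg ε hε p.1‖ ≤ 1
    rw [cut_apply]
    have h0 := hg p.1
    have h3 : ε / (ε + g p.1) ≤ 1 := (div_le_one (by positivity)).2 (by linarith)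
    have h4 : 0 ≤ ε / (ε + g p.1) := by positivity
    rw [← Complex.ofReal_one, ← Complex.ofReal_sub, Complex.norm_real, Real.norm_eq_abs, abs_le]
    constructor <;> linarith
  have hLn : ∀ y, ‖LL U T0 fx (1 - ρ) y‖ ≤ 1 * ‖y‖ := by
    intro y
    rw [one_mul, ← coe_nnnorm, ← coe_nnnorm, NNReal.coe_le_coe, Matrix.linfty_opNNNorm_def,
        Matrix.linfty_opNNNorm_def]
    refine Finset.sup_mono_fun fun i _ => Finset.sum_le_sum fun j _ => ?_
    rw [LL_apply]
    split_ifs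
    · simp
    · rw [← NNReal.coe_le_coe, coe_nnnorm, coe_nnnorm]
      refine (norm_mul_le _ _).trans ?_
      have := norm_nonneg (y i j)
      nlinarith
  have hLs : ∀ (m : BA U T0) y, LL U T0 fx (1 - ρ) (m • y) = m • LL U T0 fx (1 - ρ) y := by
    intro m y
    ext i j : 2
    rw [Matrix.smul_apply, LL_apply, LL_apply, Matrix.smul_apply]
    split_ifs
    · simp
    · simp only [smul_eq_mul]; ring
  have hr1 := Rep.map (M := M1) _ 1 hLs hLn h1 zero_le_one
  have hr2 := Rep.map (M := M2) _ 1 hLs hLn h2 zero_le_one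
  set y1 := LL U T0 fx (1 - ρ) x1
  set y2 := LL U T0 fx (1 - ρ) x2
  have hy : LL U T0 fx (1 - ρ) x = y1 + y2 := by rw [hxx, map_add]
  refine ⟨y1 + (x - (y1 + y2)), ?_, y2, hLN _, by abel, ?_, ?_⟩
  · exact Ideal.add_mem _ (hLN _) (Ideal.sub_mem _ hx (Ideal.add_mem _ (hLN _) (hLN _)))
  · have h5 : ‖x - (y1 + y2)‖ ≤ Fintype.card ι * ε := by
      refine mat_norm_le _ _ hε.le fun i j p => ?_
      rw [← hy, Matrix.sub_apply, LL_apply]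
      split_ifs with hj
      · rw [sub_zero, hx i j p (Or.inl hj), norm_zero]; exact hε.le
      · have : x i j - (1 - ρ) * x i j = ρ * x i j := by ring
        rw [this, map_mul, hρ]
        exact cut_norm _ _ _ _ _ _ (hgle i j p)
    have h6 := qM_le (hr1.add' (Rep.of (M := M1) (x - (y1 + y2))))
    have h7 : Fintype.card ι * ε < c - r := by
      rw [hεd, mul_div_assoc', div_lt_iff₀ (by positivity)]
      nlinarith
    linarith
  · have := qM_le hr2
    linarith

end N
end LinHermite


namespace LinHermite
set_option linter.unusedSectionVars false
open Filter Topology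
open scoped Matrix.Norms.Operator

section G
variable {K : Type*} [TopologicalSpace K] [CompactSpace K] [T2Space K]
variable {T : Type*} [TopologicalSpace T] [CompactSpace T] [T2Space T]
variable {U : Uni K} {T0 : Set T}
variable {ι : Type*} [Fintype ι] [DecidableEq ι]

/-- the sublevel set of a submonoid -/
def XM (M : Submonoid U.alg) : Set K := {z | ∀ m ∈ M, ‖(m : C(K, ℂ)) z‖ ≤ 1}

/-- evaluation of matrices -/
noncomputable def evM (U : Uni K) (T0 : Set T) (p : T × K) :
    Matrix ι ι (BA U T0) →ₐ[ℂ] Matrix ι ι ℂ := (ev U T0 p).mapMatrix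

lemma evM_apply (p : T × K) (x : Matrix ι ι (BA U T0)) (i j : ι) :
    evM U T0 p x i j = (x i j).fn p := rfl

lemma cinv_of_det (hT0 : IsClosed T0) (M : Submonoid U.alg) (G : Matrix ι ι (BA U T0))
    (h : ∀ p, p.2 ∈ XM M → (evM U T0 p G).det ≠ 0) :
    CInv (qM (Matrix ι ι (BA U T0)) (M.map (ofA U T0))) G := by
  refine mat_cinv _ BT_norm_one G fun χ hχ => ?_
  obtain ⟨p, hp⟩ := char_BT hT0 χ
  have : χ = ev U T0 p := AlgHom.ext hp
  rw [this]
  refine h p fun m hm => ?_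
  have := hχ _ (Submonoid.mem_map_of_mem (ofA U T0) hm)
  rwa [hp] at this

lemma det_of_linv (M : Submonoid U.alg) (G : Matrix ι ι (BA U T0))
    (h : LInv (qM (Matrix ι ι (BA U T0)) (M.map (ofA U T0))) G) (p : T × K) (hp : p.2 ∈ XM M) :
    (evM U T0 p G).det ≠ 0 := by
  refine det_ne_of_linv _ (ev U T0 p) (ev_norm p) ?_ G h
  rintro _ ⟨m, hm, rfl⟩
  exact hp m hm

lemma mat_complete (ι : Type*) [Fintype ι] [DecidableEq ι] (S : Type*) [NormedCommRing S] [CompleteSpace S] :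
    @CompleteSpace (Matrix ι ι S) PseudoMetricSpace.toUniformSpace :=
  inferInstanceAs (CompleteSpace (ι → ι → S))

theorem glueB (hT0 : IsClosed T0) (M1 M2 M12 : Submonoid U.alg) (h1 : M1 ≤ M12) (h2 : M2 ≤ M12)
    (hM : ∀ m ∈ M12, m ∈ M1 ∨ m ∈ M2) (fx : Set ι) (J : Set T) (G1 G2 : Matrix ι ι (BA U T0))
    (hG : G2 - G1 ∈ NI U T0 fx J) (d1 : ∀ p, p.2 ∈ XM M1 → (evM U T0 p G1).det ≠ 0)
    (d2 : ∀ p, p.2 ∈ XM M2 → (evM U T0 p G2).det ≠ 0)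
    (hpath : ∀ h : Matrix ι ι (BA U T0), h - 1 ∈ NI U T0 fx J →
      (∀ p, p.2 ∈ XM M12 → (evM U T0 p h).det ≠ 0) →
      ∃ Γ : unitInterval → Matrix ι ι (BA U T0), Continuous Γ ∧ (∀ s, Γ s - 1 ∈ NI U T0 fx J) ∧
        (∀ s p, p.2 ∈ XM M12 → (evM U T0 p (Γ s)).det ≠ 0) ∧ Γ 0 = 1 ∧ Γ 1 = h) :
    ∃ G, G - G1 ∈ NI U T0 fx J ∧ ∀ p, (p.2 ∈ XM M1 ∨ p.2 ∈ XM M2) → (evM U T0 p G).det ≠ 0 := by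
  have hone : ∀ M : Submonoid U.alg,
      qM (Matrix ι ι (BA U T0)) (M.map (ofA U T0)) 1 ≤ 1 := fun M =>
    (qM_le_norm _).trans (mat_norm_one BT_norm_one)
  have := mat_complete ι (BA U T0)
  obtain ⟨G, hG, l1, l2⟩ := glue (qM (Matrix ι ι (BA U T0)) (M1.map (ofA U T0)))
    (qM (Matrix ι ι (BA U T0)) (M2.map (ofA U T0))) (qM (Matrix ι ι (BA U T0)) (M12.map (ofA U T0)))
    qM_le_norm (qM_anti (Submonoid.monotone_map h1)) (qM_anti (Submonoid.monotone_map h2))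
    (hone _) (hone _) (fun c x => qM_smul c x) (NI U T0 fx J)
    (split (by
      rintro _ ⟨m, hm, rfl⟩
      exact (hM m hm).imp (Submonoid.mem_map_of_mem _) (Submonoid.mem_map_of_mem _)))
    G1 G2 hG (cinv_of_det hT0 M1 G1 d1) (cinv_of_det hT0 M2 G2 d2) (fun h hN hl => by
      obtain ⟨Γ, c, n, d, z, o⟩ := hpath h hN (fun p hp => det_of_linv M12 h hl p hp)
      refine ⟨Γ, c, n, fun s => ?_, z, o⟩
      obtain ⟨y, -, hy⟩ := cinv_of_det hT0 M12 (Γ s) (d s)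
      exact ⟨y, hy⟩)
  refine ⟨G, hG, fun p hp => ?_⟩
  rcases hp with hp | hp
  · exact det_of_linv M1 G l1 p hp
  · exact det_of_linv M2 G l2 p hp

end G

section claim
variable {K : Type*} [TopologicalSpace K] [CompactSpace K] [T2Space K]
variable {ι : Type*} [Fintype ι] [DecidableEq ι]

/-- bottom of the cylinder -/
def T00 (Y : Type) : Set (Y × unitInterval) := {p | p.2 = 0}

lemma T00_closed (Y : Type) [TopologicalSpace Y] : IsClosed (T00 Y) :=
  isClosed_eq continuous_snd continuous_const

/-- the set where everything is prescribed -/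
def JJ {Y : Type} (Z : Set Y) : Set (Y × unitInterval) := {p | p.1 ∈ Z ∨ p.2 = 1}

lemma JJ_closed {Y : Type} [TopologicalSpace Y] {Z : Set Y} (hZ : IsClosed Z) : IsClosed (JJ Z) :=
  (hZ.preimage continuous_fst).union (isClosed_eq continuous_snd continuous_const)

/-- the extension claim over the set `XM M` -/
def Claim (U : Uni K) (fx : Set ι) (M : Submonoid U.alg) : Prop :=
  ∀ (Y : Type) [TopologicalSpace Y] [CompactSpace Y] [T2Space Y] (Z : Set Y), IsClosed Z →
    ∀ G0 : Matrix ι ι (BA U (T00 Y)),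
      (∀ p, p.2 ∈ XM M → ∀ v : ι → ℂ, (∀ j, j ∉ fx → v j = 0) →
        (evM U (T00 Y) p G0).mulVec v = 0 → v = 0) →
      (∀ p, p.1 ∈ JJ Z → p.2 ∈ XM M → (evM U (T00 Y) p G0).det ≠ 0) →
      ∃ G, G - G0 ∈ NI U (T00 Y) fx (JJ Z) ∧ ∀ p, p.2 ∈ XM M → (evM U (T00 Y) p G).det ≠ 0

variable {U : Uni K} {fx : Set ι}

section pull
variable {T : Type*} [TopologicalSpace T] [CompactSpace T] [T2Space T]
variable {T' : Type*} [TopologicalSpace T'] [CompactSpace T'] [T2Space T']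

/-- pullback along a map of parameter spaces -/
noncomputable def pull (T0 : Set T) (T0' : Set T') (φ : C(T', T))
    (hφ : ∀ s ∈ T0', φ s ∈ T0) (f : BA U T0) : BA U T0' :=
  BA.mk (f.fn.comp (φ.prodMap (ContinuousMap.id K))) (fun s hs => f.fn_mem (φ s) (hφ s hs))

lemma pull_fn (T0 : Set T) (T0' : Set T') (φ : C(T', T))
    (hφ : ∀ s ∈ T0', φ s ∈ T0) (f : BA U T0) (p : T' × K) :
    (pull T0 T0' φ hφ f).fn p = f.fn (φ p.1, p.2) := rfl

end pull

lemma mat_continuous {T : Type*} [TopologicalSpace T] [CompactSpace T] [T2Space T] {T0 : Set T}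
    {X : Type*} [TopologicalSpace X] (Γ : X → Matrix ι ι (BA U T0))
    (h : ∀ i j, Continuous fun s => (Γ s i j).fn) : Continuous Γ := by
  refine continuous_matrix fun i j => ?_
  exact Continuous.subtype_mk (h i j) _

theorem path_of_claim {M : Submonoid U.alg} (hC : Claim U fx M)
    (Y : Type) [TopologicalSpace Y] [CompactSpace Y] [T2Space Y] (Z : Set Y) (hZ : IsClosed Z)
    (h : Matrix ι ι (BA U (T00 Y))) (hN : h - 1 ∈ NI U (T00 Y) fx (JJ Z))
    (hd : ∀ p, p.2 ∈ XM M → (evM U (T00 Y) p h).det ≠ 0) :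
    ∃ Γ : unitInterval → Matrix ι ι (BA U (T00 Y)), Continuous Γ ∧
      (∀ s, Γ s - 1 ∈ NI U (T00 Y) fx (JJ Z)) ∧
      (∀ s p, p.2 ∈ XM M → (evM U (T00 Y) p (Γ s)).det ≠ 0) ∧ Γ 0 = 1 ∧ Γ 1 = h := by
  let Z' : Set (Y × unitInterval) := {q | q.1 ∈ Z ∨ q.2 = 0 ∨ q.2 = 1}
  have hZ' : IsClosed Z' := (hZ.preimage continuous_fst).union
    ((isClosed_eq continuous_snd continuous_const).union
      (isClosed_eq continuous_snd continuous_const))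
  let π : C((Y × unitInterval) × unitInterval, Y × unitInterval) := ⟨fun q => (q.1.1, q.2), by fun_prop⟩
  let σ : unitInterval → C(Y × unitInterval, (Y × unitInterval) × unitInterval) :=
    fun s => ⟨fun q => ((q.1, s), q.2), by fun_prop⟩
  let w : C((Y × unitInterval) × unitInterval, ℂ) := ⟨fun q => ((q.1.2 : ℝ) : ℂ), by fun_prop⟩
  let P : BA U (T00 Y) → BA U (T00 (Y × unitInterval)) := pull (T00 Y) (T00 (Y × unitInterval)) π (fun s hs => hs)
  let G0 : Matrix ι ι (BA U (T00 (Y × unitInterval))) :=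
    Matrix.of fun i j => (1 : Matrix ι ι (BA U (T00 (Y × unitInterval)))) i j + ofT U (T00 (Y × unitInterval)) w * P ((h - 1) i j)
  have hG0 : ∀ p, evM U (T00 (Y × unitInterval)) p G0 =
      1 + ((p.1.1.2 : ℝ) : ℂ) • (evM U (T00 Y) (π p.1, p.2) h - 1) := by
    intro p
    have e1 := map_one (evM (ι := ι) U (T00 (Y × unitInterval)) p)
    rw [← map_one (evM U (T00 Y) (π p.1, p.2)), ← map_sub, map_one, ← e1]
    ext i j
    rw [Matrix.add_apply, Matrix.smul_apply, evM_apply, evM_apply, evM_apply]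
    simp only [G0, Matrix.of_apply, map_add, map_mul]
    rfl
  have hG0J : ∀ p, (p.1.1.1 ∈ Z ∨ p.1.2 = 1 ∨ p.1.1.2 = 0) → evM U (T00 (Y × unitInterval)) p G0 = 1 := by
    intro p hp
    rw [hG0]
    rcases or_assoc.2 hp with hp | hp
    · have : evM U (T00 Y) (π p.1, p.2) h - 1 = 0 := by
        rw [← map_one (evM U (T00 Y) (π p.1, p.2)), ← map_sub]
        ext i j
        exact hN i j (π p.1, p.2) (Or.inr hp)
      rw [this, smul_zero, add_zero]
    · rw [hp]; simp
  have hG01 : ∀ p, p.1.1.2 = 1 → evM U (T00 (Y × unitInterval)) p G0 = evM U (T00 Y) (π p.1, p.2) h := by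
    intro p hp
    rw [hG0, hp]; simp
  have hG0f : ∀ p i j, j ∈ fx → evM U (T00 (Y × unitInterval)) p G0 i j = (1 : Matrix ι ι ℂ) i j := by
    intro p i j hj
    rw [hG0, Matrix.add_apply, Matrix.smul_apply, ← map_one (evM U (T00 Y) (π p.1, p.2)),
      ← map_sub]
    have : evM U (T00 Y) (π p.1, p.2) (h - 1) i j = 0 := hN i j (π p.1, p.2) (Or.inl hj)
    rw [this, smul_zero, add_zero, map_one]
  obtain ⟨G, hGN, hGd⟩ := hC (Y × unitInterval) Z' hZ' G0 (by
    intro p _ v hv hGv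
    have : (evM U (T00 (Y × unitInterval)) p G0).mulVec v = (1 : Matrix ι ι ℂ).mulVec v := by
      ext i
      simp only [Matrix.mulVec, dotProduct]
      refine Finset.sum_congr rfl fun j _ => ?_
      by_cases hj : j ∈ fx
      · rw [hG0f p i j hj]
      · rw [hv j hj, mul_zero, mul_zero]
    rw [this, Matrix.one_mulVec] at hGv
    exact hGv) (by
    rintro p hp hpX
    rcases hp with (hp | hp | hp) | hp
    · rw [hG0J p (Or.inl hp)]; simp
    · rw [hG0J p (Or.inr (Or.inr hp))]; simp
    · rw [hG01 p hp]; exact hd _ hpX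
    · rw [hG0J p (Or.inr (Or.inl hp))]; simp)
  have hGeq : ∀ p i j, (j ∈ fx ∨ p.1 ∈ JJ Z') → evM U (T00 (Y × unitInterval)) p G i j = evM U (T00 (Y × unitInterval)) p G0 i j := by
    intro p i j hp
    have := hGN i j p hp
    rw [Matrix.sub_apply, map_sub, sub_eq_zero] at this
    exact this
  have hσ : ∀ s : unitInterval, ∀ q ∈ T00 Y, σ s q ∈ T00 (Y × unitInterval) := fun s q hq => hq
  let Γ : unitInterval → Matrix ι ι (BA U (T00 Y)) :=
    fun s => Matrix.of fun i j => pull (T00 (Y × unitInterval)) (T00 Y) (σ s) (hσ s) (G i j)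
  have hΓ : ∀ s p, evM U (T00 Y) p (Γ s) = evM U (T00 (Y × unitInterval)) (σ s p.1, p.2) G := fun s p => by
    ext i j; rfl
  have hext : ∀ x y : Matrix ι ι (BA U (T00 Y)),
      (∀ p, evM U (T00 Y) p x = evM U (T00 Y) p y) → x = y := fun x y hxy => by
    ext i j : 2
    exact BA.ext fun p => congrFun (congrFun (hxy p) i) j
  refine ⟨Γ, ?_, ?_, ?_, ?_, ?_⟩
  · refine mat_continuous Γ fun i j => ?_
    let F : C(unitInterval × ((Y × unitInterval) × K), ℂ) :=
      ⟨fun q => (G i j).fn (((q.2.1.1, q.1), q.2.1.2), q.2.2), by fun_prop⟩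
    exact F.curry.continuous
  · intro s i j p hp
    rw [Matrix.sub_apply, map_sub, sub_eq_zero]
    have e1 : ev U (T00 Y) p (Γ s i j) = evM U (T00 (Y × unitInterval)) (σ s p.1, p.2) G i j := rfl
    have e2 : ev U (T00 Y) p ((1 : Matrix ι ι (BA U (T00 Y))) i j) = (1 : Matrix ι ι ℂ) i j := by
      rw [← map_one (evM U (T00 Y) p)]; rfl
    rw [e1, e2, hGeq (σ s p.1, p.2) i j (hp.imp id (fun hp => Or.imp (fun h => Or.inl h) id hp))]
    rcases hp with hp | hp
    · exact hG0f _ i j hp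
    · rw [hG0J (σ s p.1, p.2) (Or.imp id Or.inl hp)]
  · intro s p hp
    rw [hΓ]; exact hGd _ hp
  · apply hext; intro p
    rw [hΓ, map_one, ← hG0J (σ 0 p.1, p.2) (Or.inr (Or.inr rfl))]
    ext i j
    exact hGeq _ i j (Or.inr (Or.inl (Or.inr (Or.inl rfl))))
  · apply hext; intro p
    rw [hΓ, ← show evM U (T00 (Y × unitInterval)) (σ 1 p.1, p.2) G0 = evM U (T00 Y) p h from hG01 _ rfl]
    ext i j
    exact hGeq _ i j (Or.inr (Or.inl (Or.inr (Or.inr rfl))))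

end claim
end LinHermite


namespace LinHermite
set_option linter.unusedSectionVars false
open Filter Topology

section step
variable {K : Type*} [TopologicalSpace K] [CompactSpace K] [T2Space K]
variable {ι : Type*} [Fintype ι] [DecidableEq ι]
variable {U : Uni K} {fx : Set ι}

lemma exp_char {S : Type*} [NormedCommRing S] [NormedAlgebra ℂ S] [CompleteSpace S] (x : S) :
    ∃ e : S, ∀ χ : S →ₐ[ℂ] ℂ, χ e = Complex.exp (χ x) := by
  refine ⟨NormedSpace.exp x, fun χ => ?_⟩
  have hc : Continuous χ := map_continuous χ.toContinuousLinearMap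
  have := NormedSpace.map_exp_of_mem_ball (𝕂 := ℂ) χ hc x
    ((NormedSpace.expSeries_radius_eq_top ℂ S).symm ▸ edist_lt_top _ _)
  rw [this, Complex.exp_eq_exp_ℂ]

lemma expA (a : U.alg) (τ : ℝ) : ∃ b b' : U.alg, b * b' = 1 ∧
    (∀ z, ‖(b : C(K, ℂ)) z‖ = Real.exp (((a : C(K, ℂ)) z).re - τ)) ∧
    (∀ z, ‖(b' : C(K, ℂ)) z‖ = Real.exp (τ - ((a : C(K, ℂ)) z).re)) := by
  have : CompleteSpace U.alg := U.closed.completeSpace_coe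
  have key : ∀ x : U.alg, ∃ e : U.alg, ∀ z,
      (e : C(K, ℂ)) z = Complex.exp ((x : C(K, ℂ)) z) := by
    intro x
    obtain ⟨e, he⟩ := exp_char x
    exact ⟨e, fun z => he ((ContinuousMap.evalAlgHom ℂ ℂ z).comp U.alg.val)⟩
  obtain ⟨b, hb⟩ := key (a - algebraMap ℂ U.alg τ)
  obtain ⟨b', hb'⟩ := key (algebraMap ℂ U.alg τ - a)
  have hb2 : ∀ z, (b : C(K, ℂ)) z = Complex.exp ((a : C(K, ℂ)) z - τ) := hb
  have hb2' : ∀ z, (b' : C(K, ℂ)) z = Complex.exp (τ - (a : C(K, ℂ)) z) := hb'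
  refine ⟨b, b', ?_, fun z => ?_, fun z => ?_⟩
  · apply Subtype.ext
    ext z
    change (b : C(K, ℂ)) z * (b' : C(K, ℂ)) z = 1
    rw [hb2, hb2', ← Complex.exp_add]
    simp
  · rw [hb2, Complex.norm_exp]; simp
  · rw [hb2', Complex.norm_exp]; simp

lemma mem_XM_sup (M : Submonoid U.alg) (s : Set U.alg) (z : K) :
    z ∈ XM (M ⊔ Submonoid.closure s) ↔ z ∈ XM M ∧ ∀ m ∈ s, ‖(m : C(K, ℂ)) z‖ ≤ 1 := by
  constructor
  · intro h
    exact ⟨fun m hm => h m (le_sup_left (a := M) hm),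
      fun m hm => h m (le_sup_right (a := M) (Submonoid.subset_closure hm))⟩
  · rintro ⟨h1, h2⟩
    let Q : Submonoid U.alg :=
      { carrier := {m | ‖(m : C(K, ℂ)) z‖ ≤ 1}
        one_mem' := by simp
        mul_mem' := fun {a b} ha hb => by
          change ‖(a : C(K, ℂ)) z * (b : C(K, ℂ)) z‖ ≤ 1
          rw [norm_mul]
          exact mul_le_one₀ ha (norm_nonneg _) hb }
    have : M ⊔ Submonoid.closure s ≤ Q := sup_le h1 (Submonoid.closure_le.2 h2)
    exact fun m hm => this hm

lemma XM_closed (M : Submonoid U.alg) : IsClosed (XM M) := by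
  have : XM M = ⋂ m ∈ M, {z | ‖(m : C(K, ℂ)) z‖ ≤ 1} := by ext z; simp [XM]
  rw [this]
  exact isClosed_biInter fun m _ => isClosed_le (by fun_prop) continuous_const

lemma split_monoid {S : Type*} [CommMonoid S] (M : Submonoid S) (b b' : S) (hb : b * b' = 1) :
    ∀ m ∈ M ⊔ Submonoid.closure {b, b'},
      m ∈ M ⊔ Submonoid.closure {b} ∨ m ∈ M ⊔ Submonoid.closure {b'} := by
  intro m hm
  obtain ⟨m0, hm0, y, hy, rfl⟩ := Submonoid.mem_sup.1 hm
  obtain ⟨i, j, rfl⟩ := (Submonoid.mem_closure_pair _ _ _).1 hy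
  rcases le_total i j with h | h
  · right
    obtain ⟨l, rfl⟩ := Nat.exists_eq_add_of_le h
    refine Submonoid.mem_sup.2 ⟨m0, hm0, b' ^ l, Submonoid.pow_mem _ (Submonoid.subset_closure (Set.mem_singleton _)) _, ?_⟩
    rw [pow_add, ← mul_assoc (b ^ i), ← mul_pow, hb, one_pow, one_mul]
  · left
    obtain ⟨l, rfl⟩ := Nat.exists_eq_add_of_le h
    refine Submonoid.mem_sup.2 ⟨m0, hm0, b ^ l, Submonoid.pow_mem _ (Submonoid.subset_closure (Set.mem_singleton _)) _, ?_⟩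
    rw [pow_add, mul_right_comm, ← mul_pow, hb, one_pow, one_mul]

theorem step (M : Submonoid U.alg) (a : U.alg)
    (hC : ∀ M' : Submonoid U.alg, M ≤ M' → (∃ τ : ℝ, ∀ z ∈ XM M', ((a : C(K, ℂ)) z).re = τ) →
      Claim U fx M') : Claim U fx M := by
  intro Y _ _ _ Z hZ G0 hrank hJ
  set r : K → ℝ := fun z => ((a : C(K, ℂ)) z).re with hr
  have hrc : Continuous r := by fun_prop
  let P : ℝ → ℝ → Prop := fun α β => ∃ G, G - G0 ∈ NI U (T00 Y) fx (JJ Z) ∧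
    ∀ p, p.2 ∈ XM M → α ≤ r p.2 → r p.2 ≤ β → (evM U (T00 Y) p G).det ≠ 0
  have hPmono : ∀ α β α' β', α ≤ α' → β' ≤ β → P α β → P α' β' := by
    rintro α β α' β' h1 h2 ⟨G, hG, hd⟩
    exact ⟨G, hG, fun p hp h3 h4 => hd p hp (h1.trans h3) (h4.trans h2)⟩
  -- local solutions
  have hloc : ∀ τ, ∃ δ > 0, P (τ - δ) (τ + δ) := by
    intro τ
    obtain ⟨b, b', -, hb, hb'⟩ := expA a τ
    have hX : ∀ z, z ∈ XM (M ⊔ Submonoid.closure {b, b'}) ↔ z ∈ XM M ∧ r z = τ := by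
      intro z
      rw [mem_XM_sup]
      simp only [Set.mem_insert_iff, Set.mem_singleton_iff, forall_eq_or_imp, forall_eq, hb, hb',
        Real.exp_le_one_iff]
      refine and_congr_right fun _ => ?_
      constructor
      · rintro ⟨h1, h2⟩; simp only [hr]; linarith
      · intro h; simp only [hr] at h; constructor <;> linarith
    obtain ⟨G, hG, hd⟩ := hC (M ⊔ Submonoid.closure {b, b'}) le_sup_left
      ⟨τ, fun z hz => ((hX z).1 hz).2⟩ Y Z hZ G0
      (fun p hp => hrank p ((hX _).1 hp).1) (fun p h1 hp => hJ p h1 ((hX _).1 hp).1)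
    have hdc : Continuous fun p : (Y × unitInterval) × K => (evM U (T00 Y) p G).det := by
      refine Continuous.matrix_det (continuous_matrix fun i j => ?_)
      exact ((G i j).fn).continuous
    let E : Set ((Y × unitInterval) × K) := {p | p.2 ∈ XM M ∧ (evM U (T00 Y) p G).det = 0}
    have hE : IsCompact E :=
      (((XM_closed M).preimage continuous_snd).inter (isClosed_eq hdc continuous_const)).isCompact
    have hE' : IsClosed ((fun p : (Y × unitInterval) × K => r p.2) '' E) :=
      (hE.image (by fun_prop)).isClosed
    have hτ : τ ∈ ((fun p : (Y × unitInterval) × K => r p.2) '' E)ᶜ := by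
      rintro ⟨p, ⟨h1, h2⟩, h3⟩
      exact hd p ((hX _).2 ⟨h1, h3⟩) h2
    obtain ⟨δ, hδ, hball⟩ := Metric.isOpen_iff.1 hE'.isOpen_compl τ hτ
    refine ⟨δ / 2, by positivity, G, hG, fun p hp h1 h2 h0 => ?_⟩
    refine hball (a := r p.2) ?_ ⟨p, ⟨hp, h0⟩, rfl⟩
    rw [Metric.mem_ball, Real.dist_eq, abs_lt]
    constructor <;> linarith
  -- gluing
  have hglue : ∀ α β γ, α ≤ β → β ≤ γ → P α β → P β γ → P α γ := by
    rintro α β γ hαβ hβγ ⟨G1, hG1, hd1⟩ ⟨G2, hG2, hd2⟩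
    obtain ⟨-, a1, -, -, ha1⟩ := expA a α
    obtain ⟨a2, -, -, ha2, -⟩ := expA a γ
    obtain ⟨b, b', hbb, hb, hb'⟩ := expA a β
    set M0 := M ⊔ Submonoid.closure {a1, a2} with hM0
    have hX0 : ∀ z, z ∈ XM M0 ↔ z ∈ XM M ∧ α ≤ r z ∧ r z ≤ γ := by
      intro z
      rw [hM0, mem_XM_sup]
      simp only [Set.mem_insert_iff, Set.mem_singleton_iff, forall_eq_or_imp, forall_eq, ha1, ha2,
        Real.exp_le_one_iff, sub_nonpos, hr]
    have hX1 : ∀ z, z ∈ XM (M0 ⊔ Submonoid.closure {b}) ↔ z ∈ XM M0 ∧ r z ≤ β := by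
      intro z
      rw [mem_XM_sup]
      simp only [Set.mem_singleton_iff, forall_eq, hb, Real.exp_le_one_iff, sub_nonpos, hr]
    have hX2 : ∀ z, z ∈ XM (M0 ⊔ Submonoid.closure {b'}) ↔ z ∈ XM M0 ∧ β ≤ r z := by
      intro z
      rw [mem_XM_sup]
      simp only [Set.mem_singleton_iff, forall_eq, hb', Real.exp_le_one_iff, sub_nonpos, hr]
    have hX12 : ∀ z, z ∈ XM (M0 ⊔ Submonoid.closure {b, b'}) → r z = β := by
      intro z hz
      rw [mem_XM_sup] at hz
      simp only [Set.mem_insert_iff, Set.mem_singleton_iff, forall_eq_or_imp, forall_eq, hb, hb',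
        Real.exp_le_one_iff, sub_nonpos] at hz
      exact le_antisymm hz.2.1 hz.2.2
    obtain ⟨G, hG, hd⟩ := glueB (T00_closed Y) (M0 ⊔ Submonoid.closure {b})
      (M0 ⊔ Submonoid.closure {b'}) (M0 ⊔ Submonoid.closure {b, b'})
      (sup_le_sup_left (Submonoid.closure_mono (by simp)) _)
      (sup_le_sup_left (Submonoid.closure_mono (by simp)) _)
      (split_monoid M0 b b' hbb) fx (JJ Z) G1 G2
      (by have := Ideal.sub_mem _ hG2 hG1
          rwa [sub_sub_sub_cancel_right] at this)
      (fun p hp => hd1 p ((hX0 _).1 ((hX1 _).1 hp).1).1 ((hX0 _).1 ((hX1 _).1 hp).1).2.1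
        ((hX1 _).1 hp).2)
      (fun p hp => hd2 p ((hX0 _).1 ((hX2 _).1 hp).1).1 ((hX2 _).1 hp).2
        ((hX0 _).1 ((hX2 _).1 hp).1).2.2)
      (fun h hN hdet => path_of_claim (hC _ (le_sup_left.trans le_sup_left) ⟨β, hX12⟩) Y Z hZ h hN hdet)
    refine ⟨G, ?_, fun p hp h1 h2 => hd p ?_⟩
    · have := Ideal.add_mem _ hG hG1
      rwa [sub_add_sub_cancel] at this
    · have h0 := (hX0 p.2).2 ⟨hp, h1, h2⟩
      rcases le_total (r p.2) β with h | h
      · exact Or.inl ((hX1 _).2 ⟨h0, h⟩)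
      · exact Or.inr ((hX2 _).2 ⟨h0, h⟩)
  -- global
  set L : ℝ := ‖(a : C(K, ℂ))‖ with hL
  have hL0 : 0 ≤ L := norm_nonneg _
  have hrL : ∀ z, |r z| ≤ L := fun z =>
    (Complex.abs_re_le_norm _).trans (ContinuousMap.norm_coe_le_norm _ z)
  choose δ hδ hP using hloc
  obtain ⟨t, ht0, htm, ⟨n, htn⟩, htc⟩ := exists_monotone_Icc_subset_open_cover_Icc
    (a := -L) (b := L) (by linarith)
    (c := fun τ : ℝ => {x : Set.Icc (-L) L | (x : ℝ) ∈ Set.Ioo (τ - δ τ) (τ + δ τ)})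
    (fun τ => isOpen_Ioo.preimage continuous_subtype_val)
    (fun x _ => Set.mem_iUnion.2 ⟨x, by
      have := hδ x
      constructor <;> linarith⟩)
  have hstep : ∀ m, P (t m) (t (m + 1)) := by
    intro m
    obtain ⟨τ, hτ⟩ := htc m
    have h1 := hτ (Set.left_mem_Icc.2 (htm m.le_succ))
    have h2 := hτ (Set.right_mem_Icc.2 (htm m.le_succ))
    exact hPmono _ _ _ _ h1.1.le h2.2.le (hP τ)
  have hall : ∀ m, P (t 0) (t (m + 1)) := by
    intro m
    induction m with
    | zero => exact hstep 0
    | succ m ih =>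
      exact hglue _ _ _ (htm (Nat.zero_le _)) (htm (Nat.le_succ _)) ih (hstep (m + 1))
  have hfin := hall n
  rw [ht0, htn (n + 1) (Nat.le_succ n)] at hfin
  obtain ⟨G, hG, hd⟩ := hfin
  refine ⟨G, hG, fun p hp => hd p hp ?_ ?_⟩
  · exact (abs_le.1 (hrL p.2)).1
  · exact (abs_le.1 (hrL p.2)).2

theorem induct (L : List U.alg) : ∀ (M : Submonoid U.alg),
    (∀ M' : Submonoid U.alg, M ≤ M' →
      (∀ a ∈ L, ∃ τ : ℝ, ∀ z ∈ XM M', ((a : C(K, ℂ)) z).re = τ) → Claim U fx M') → Claim U fx M := by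
  induction L with
  | nil => intro M h; exact h M le_rfl (by simp)
  | cons a L ih =>
    intro M h
    refine step M a fun M' hM' ⟨τ, hτ⟩ => ih M' fun M'' hM'' h'' => h M'' (hM'.trans hM'') ?_
    intro x hx
    rcases List.mem_cons.1 hx with rfl | hx
    · exact ⟨τ, fun z hz => hτ z fun m hm => hz m (hM'' hm)⟩
    · exact h'' x hx

end step
end LinHermite


namespace LinHermite
set_option linter.unusedSectionVars false
open Filter Topology

section base
variable {ι : Type*} [Fintype ι] [DecidableEq ι]

open Classical in
/-- column projector -/
noncomputable def DD (fx : Set ι) : Matrix ι ι ℂ := Matrix.diagonal fun j => if j ∈ fx then 1 else 0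

lemma DD_mul (fx : Set ι) : DD fx * DD fx = DD fx := by
  rw [DD, Matrix.diagonal_mul_diagonal]; congr 1; ext j; split_ifs <;> simp

lemma DD_conj (fx : Set ι) : (DD fx).conjTranspose = DD fx := by
  rw [DD, Matrix.diagonal_conjTranspose]; congr 1; ext j; simp only [Pi.star_apply]; split_ifs <;> simp

open Classical in
lemma DD_mulVec (fx : Set ι) (v : ι → ℂ) (j : ι) :
    (DD fx).mulVec v j = if j ∈ fx then v j else 0 := by
  rw [DD, Matrix.mulVec_diagonal]; split_ifs <;> simp

open Classical in
lemma mul_DD (fx : Set ι) (x : Matrix ι ι ℂ) (i j : ι) :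
    (x * DD fx) i j = if j ∈ fx then x i j else 0 := by
  rw [DD, Matrix.mul_diagonal]; split_ifs <;> simp

/-- the Gram matrix -/
noncomputable def HH (fx : Set ι) (x : Matrix ι ι ℂ) : Matrix ι ι ℂ :=
  (x * DD fx).conjTranspose * (x * DD fx) + (1 - DD fx).conjTranspose * (1 - DD fx)

lemma gram_dot (a : Matrix ι ι ℂ) (v : ι → ℂ) :
    dotProduct (star v) ((a.conjTranspose * a).mulVec v) =
      dotProduct (star (a.mulVec v)) (a.mulVec v) := by
  rw [← Matrix.mulVec_mulVec, Matrix.dotProduct_mulVec, Matrix.star_mulVec]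

open scoped ComplexOrder in
lemma gram_sum (a b : Matrix ι ι ℂ) (v : ι → ℂ)
    (h : (a.conjTranspose * a + b.conjTranspose * b).mulVec v = 0) :
    a.mulVec v = 0 ∧ b.mulVec v = 0 := by
  have h1 : dotProduct (star (a.mulVec v)) (a.mulVec v) +
      dotProduct (star (b.mulVec v)) (b.mulVec v) = 0 := by
    rw [← gram_dot, ← gram_dot, ← dotProduct_add, ← Matrix.add_mulVec, h, dotProduct_zero]
  have hp1 := dotProduct_star_self_nonneg (a.mulVec v)
  have hp2 := dotProduct_star_self_nonneg (b.mulVec v)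
  have h2 := (add_eq_zero_iff_of_nonneg hp1 hp2).1 h1
  exact ⟨dotProduct_star_self_eq_zero.1 h2.1, dotProduct_star_self_eq_zero.1 h2.2⟩

lemma HH_det (fx : Set ι) (x : Matrix ι ι ℂ)
    (hx : ∀ v : ι → ℂ, (∀ j, j ∉ fx → v j = 0) → x.mulVec v = 0 → v = 0) : (HH fx x).det ≠ 0 := by
  intro h0
  obtain ⟨v, hv, hv0⟩ := Matrix.exists_mulVec_eq_zero_iff.2 h0
  apply hv
  obtain ⟨h3, h4⟩ := gram_sum _ _ v hv0
  have h5 : v = (DD fx).mulVec v := by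
    rw [Matrix.sub_mulVec, Matrix.one_mulVec, sub_eq_zero] at h4; exact h4
  refine hx v (fun j hj => ?_) ?_
  · rw [h5, DD_mulVec, if_neg hj]
  · rw [← Matrix.mulVec_mulVec, ← h5] at h3; exact h3

/-- left inverse of the columns -/
noncomputable def Lf (fx : Set ι) (x : Matrix ι ι ℂ) : Matrix ι ι ℂ :=
  (HH fx x).det⁻¹ • ((HH fx x).adjugate * (x * DD fx).conjTranspose)

lemma Lf_mul (fx : Set ι) (x : Matrix ι ι ℂ) (h : (HH fx x).det ≠ 0) :
    Lf fx x * (x * DD fx) = DD fx := by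
  have h1 : (x * DD fx).conjTranspose * (x * DD fx) = HH fx x * DD fx := by
    rw [HH, add_mul, Matrix.mul_assoc, Matrix.mul_assoc x, DD_mul, Matrix.mul_assoc (1 - DD fx).conjTranspose,
      sub_mul, DD_mul, one_mul, sub_self, mul_zero, add_zero]
  rw [Lf, Matrix.smul_mul, Matrix.mul_assoc, h1, ← Matrix.mul_assoc, Matrix.adjugate_mul,
    Matrix.smul_mul, smul_smul, inv_mul_cancel₀ h, one_smul, one_mul]

theorem base_top (fx : Set ι) (Y : Type) [TopologicalSpace Y] [CompactSpace Y] [T2Space Y]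
    (Z : Set Y) (hZ : IsClosed Z) (g : Y × unitInterval → Matrix ι ι ℂ) (hg : Continuous g)
    (hrank : ∀ s, ∀ v : ι → ℂ, (∀ j, j ∉ fx → v j = 0) → (g s).mulVec v = 0 → v = 0)
    (hJ : ∀ s ∈ JJ Z, (g s).det ≠ 0) :
    ∃ k : Y × unitInterval → Matrix ι ι ℂ, Continuous k ∧ (∀ s, (k s).det ≠ 0) ∧
      (∀ s ∈ JJ Z, k s = g s) ∧ ∀ s i j, j ∈ fx → k s i j = g s i j := by
  let W : Set Y := {y | ∀ t, (g (y, t)).det ≠ 0}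
  have hW : IsClosed Wᶜ := by
    have : Wᶜ = Prod.fst '' {s | (g s).det = 0} := by
      ext y
      constructor
      · intro h
        obtain ⟨t, ht⟩ := not_forall.1 h
        exact ⟨(y, t), not_not.1 ht, rfl⟩
      · rintro ⟨⟨y', t⟩, h, rfl⟩ h2
        exact h2 t h
    rw [this]
    exact (IsCompact.image (isClosed_eq hg.matrix_det continuous_const).isCompact
      continuous_fst).isClosed
  obtain ⟨l, hl0, hl1, hl⟩ := exists_continuous_zero_one_of_isClosed hZ hW
    (Set.disjoint_compl_right_iff_subset.2 fun y hy t => hJ (y, t) (Or.inl hy))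
  let lI : Y → unitInterval := fun y => ⟨l y, hl y⟩
  have hlI : Continuous lI := by fun_prop
  let φ : unitInterval → Y × unitInterval → Y × unitInterval :=
    fun r s => (s.1, max s.2 (r * lI s.1))
  have hφ : Continuous fun q : unitInterval × (Y × unitInterval) => φ q.1 q.2 := by
    dsimp only [φ]; fun_prop
  have hφJ : ∀ r, ∀ s ∈ JJ Z, φ r s = s := by
    rintro r ⟨y, t⟩ (hs | hs)
    · have : lI y = 0 := Subtype.ext (hl0 hs)
      simp [φ, this]
    · have : t = 1 := hs
      simp only [φ, this]
      exact Prod.ext rfl (max_eq_left unitInterval.le_one')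
  have hφ0 : ∀ s, φ 0 s = s := by
    rintro ⟨y, t⟩; simp [φ]
  have hφ1 : ∀ s, (g (φ 1 s)).det ≠ 0 := by
    rintro ⟨y, t⟩
    by_cases hy : y ∈ W
    · exact hy _
    · have : lI y = 1 := Subtype.ext (hl1 hy)
      refine hJ _ (Or.inr ?_)
      simp only [φ, this, mul_one]
      exact max_eq_right unitInterval.le_one'
  have hdet : ∀ s, (HH fx (g s)).det ≠ 0 := fun s => HH_det fx _ (hrank s)
  have hHc : Continuous fun s => HH fx (g s) := by
    unfold HH; fun_prop
  have hLc : Continuous fun s => Lf fx (g s) := by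
    unfold Lf
    refine Continuous.smul (hHc.matrix_det.inv₀ hdet) ?_
    exact (hHc.matrix_adjugate).matrix_mul (by fun_prop)
  let V : unitInterval → unitInterval → Y × unitInterval → Matrix ι ι ℂ := fun r' r s =>
    1 + (g (φ r' s) - g (φ r s)) * DD fx * Lf fx (g (φ r s))
  have hVc : Continuous fun q : (unitInterval × unitInterval) × (Y × unitInterval) =>
      V q.1.1 q.1.2 q.2 := by
    have c1 : Continuous fun q : (unitInterval × unitInterval) × (Y × unitInterval) =>
      φ q.1.1 q.2 := hφ.comp (by fun_prop : Continuous fun q :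
        (unitInterval × unitInterval) × (Y × unitInterval) => (q.1.1, q.2))
    have c2 : Continuous fun q : (unitInterval × unitInterval) × (Y × unitInterval) =>
      φ q.1.2 q.2 := hφ.comp (by fun_prop : Continuous fun q :
        (unitInterval × unitInterval) × (Y × unitInterval) => (q.1.2, q.2))
    refine continuous_const.add ((((hg.comp c1).sub (hg.comp c2)).matrix_mul continuous_const).matrix_mul
      (hLc.comp c2))
  let Bad : Set (unitInterval × unitInterval) := Prod.fst '' {q : (unitInterval × unitInterval) ×
    (Y × unitInterval) | (V q.1.1 q.1.2 q.2).det = 0}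
  have hBad : IsClosed Bad := (IsCompact.image
    (isClosed_eq hVc.matrix_det continuous_const).isCompact continuous_fst).isClosed
  have hBadD : Badᶜ ∈ uniformity unitInterval := by
    rw [← nhdsSet_diagonal_eq_uniformity]
    refine hBad.isOpen_compl.mem_nhdsSet.2 ?_
    rintro ⟨r, r'⟩ h
    have : r = r' := h
    subst this
    rintro ⟨q, hq, hq2⟩
    have hq' : (V q.1.1 q.1.2 q.2).det = 0 := hq
    rw [hq2] at hq'
    simp [V] at hq'
  obtain ⟨δ, hδ, hball⟩ := Metric.mem_uniformity_dist.1 hBadD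
  let Sol : Set unitInterval := {r | ∃ k : Y × unitInterval → Matrix ι ι ℂ, Continuous k ∧
    (∀ s, (k s).det ≠ 0) ∧ (∀ s ∈ JJ Z, k s = g s) ∧ ∀ s, k s * DD fx = g (φ r s) * DD fx}
  have hstep : ∀ r ∈ Sol, ∀ r', dist r' r < δ → r' ∈ Sol := by
    rintro r ⟨k, hk, hkd, hkJ, hkD⟩ r' hr
    refine ⟨fun s => V r' r s * k s, ?_, ?_, ?_, ?_⟩
    · exact (hVc.comp (by fun_prop : Continuous fun s : Y × unitInterval =>
        (((r', r) : unitInterval × unitInterval), s))).matrix_mul hk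
    · intro s
      rw [Matrix.det_mul]
      refine mul_ne_zero (fun h0 => ?_) (hkd s)
      exact hball hr ⟨((r', r), s), h0, rfl⟩
    · intro s hs
      simp only [V]
      rw [hφJ r s hs, hφJ r' s hs, sub_self, zero_mul, zero_mul, add_zero, one_mul, hkJ s hs]
    · intro s
      simp only [V]
      rw [Matrix.mul_assoc, hkD, add_mul, one_mul, Matrix.mul_assoc _ (Lf _ _), Lf_mul fx _ (hdet _),
        Matrix.mul_assoc, DD_mul, sub_mul, add_sub_cancel]
  have h1 : (1 : unitInterval) ∈ Sol := by
    refine ⟨fun s => g (φ 1 s), hg.comp (hφ.comp (by fun_prop : Continuous fun s : Y × unitInterval =>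
      ((1 : unitInterval), s))), hφ1, fun s hs => congrArg g (hφJ 1 s hs), fun s => rfl⟩
  have hclopen : IsClopen Sol := by
    refine ⟨⟨Metric.isOpen_iff.2 fun r hr => ⟨δ, hδ, fun r' hr' h => hr ?_⟩⟩,
      Metric.isOpen_iff.2 fun r hr => ⟨δ, hδ, fun r' hr' => hstep r hr r' hr'⟩⟩
    exact hstep r' h r (by rw [dist_comm]; exact hr')
  have huniv := hclopen.eq_univ ⟨1, h1⟩
  obtain ⟨k, hk, hkd, hkJ, hkD⟩ : (0 : unitInterval) ∈ Sol := huniv ▸ Set.mem_univ _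
  refine ⟨k, hk, hkd, hkJ, fun s i j hj => ?_⟩
  have := congrFun (congrFun (hkD s) i) j
  rwa [mul_DD, mul_DD, if_pos hj, if_pos hj, hφ0] at this

variable {K : Type*} [TopologicalSpace K] [CompactSpace K] [T2Space K]
variable {U : Uni K} {fx : Set ι}

theorem base (M : Submonoid U.alg) (hM : ∀ z ∈ XM M, ∀ z' ∈ XM M, z = z') : Claim U fx M := by
  intro Y _ _ _ Z hZ G0 hrank hJ
  by_cases hne : ∃ z0, z0 ∈ XM M
  · obtain ⟨z0, hz0⟩ := hne
    let g : Y × unitInterval → Matrix ι ι ℂ := fun s => evM U (T00 Y) (s, z0) G0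
    have hg : Continuous g := continuous_matrix fun i j =>
      (G0 i j).fn.continuous.comp (by fun_prop : Continuous fun s : Y × unitInterval => (s, z0))
    obtain ⟨k, hk, hkd, hkJ, hkf⟩ := base_top fx Y Z hZ g hg (fun s => hrank (s, z0) hz0)
      (fun s hs => hJ (s, z0) hs hz0)
    let E : Matrix ι ι (BA U (T00 Y)) := Matrix.of fun i j => ofT U (T00 Y)
      ⟨fun s => k s i j - g s i j, (hk.matrix_elem i j).sub (hg.matrix_elem i j)⟩
    have hE : ∀ p, evM U (T00 Y) p E = k p.1 - g p.1 := fun p => by ext i j; rfl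
    refine ⟨G0 + E, ?_, fun p hp => ?_⟩
    · rw [add_sub_cancel_left]
      intro i j p hp
      change evM U (T00 Y) p E i j = 0
      rw [hE, Matrix.sub_apply, sub_eq_zero]
      rcases hp with hp | hp
      · exact hkf _ i j hp
      · rw [hkJ _ hp]
    · have hpz : p = (p.1, z0) := Prod.ext rfl (hM _ hp _ hz0)
      have : evM U (T00 Y) p (G0 + E) = k p.1 := by
        rw [map_add, hE, hpz]
        simp [g]
      rw [this]; exact hkd _
  · exact ⟨G0, by rw [sub_self]; exact Ideal.zero_mem _, fun p hp => (hne ⟨_, hp⟩).elim⟩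

end base
end LinHermite


namespace LinHermite
set_option linter.unusedSectionVars false
open Filter Topology

section hull
variable {A : Type*} [NormedCommRing A] [NormedAlgebra ℂ A] [CompleteSpace A]
variable {σ : Type*} [Fintype σ] (a : σ → A)

/-- a polynomial hull -/
def Hull : Set (σ → ℂ) :=
  {z | ∀ p : MvPolynomial σ ℂ, ‖MvPolynomial.eval z p‖ ≤ ‖MvPolynomial.aeval a p‖ * ‖(1 : A)‖}

lemma hull_closed : IsClosed (Hull a) := by
  have : Hull a = ⋂ p : MvPolynomial σ ℂ,
      {z | ‖MvPolynomial.eval z p‖ ≤ ‖MvPolynomial.aeval a p‖ * ‖(1 : A)‖} := by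
    ext z; simp [Hull]
  rw [this]
  exact isClosed_iInter fun p => isClosed_le (MvPolynomial.continuous_eval p).norm continuous_const

lemma hull_compact : IsCompact (Hull a) := by
  refine IsCompact.of_isClosed_subset
    (isCompact_univ_pi fun i : σ => isCompact_closedBall (0 : ℂ) (‖a i‖ * ‖(1 : A)‖)) (hull_closed a) ?_
  intro z hz i _
  have := hz (MvPolynomial.X i)
  simpa using this

instance : CompactSpace (Hull a) := isCompact_iff_compactSpace.1 (hull_compact a)

/-- polynomials as functions on the hull -/
noncomputable def polyC : MvPolynomial σ ℂ →ₐ[ℂ] C(Hull a, ℂ) :=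
  MvPolynomial.aeval fun i => ⟨fun z => z.1 i, (continuous_apply i).comp continuous_subtype_val⟩

lemma polyC_apply (p : MvPolynomial σ ℂ) (z : Hull a) :
    polyC a p z = MvPolynomial.eval z.1 p := by
  induction p using MvPolynomial.induction_on with
  | C c =>
    rw [MvPolynomial.eval_C, ← MvPolynomial.algebraMap_eq, AlgHom.commutes]; rfl
  | add p q hp hq => rw [map_add, map_add, ← hp, ← hq]; rfl
  | mul_X p i hp =>
    rw [map_mul, map_mul, ← hp, MvPolynomial.eval_X]
    have : polyC a (MvPolynomial.X i) = ⟨fun z => z.1 i, (continuous_apply i).comp continuous_subtype_val⟩ := by simp [polyC]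
    rw [this]; rfl

/-- closure of polynomials -/
noncomputable def polyAlg : Subalgebra ℂ C(Hull a, ℂ) := (polyC a).range.topologicalClosure

lemma polyC_mem (p : MvPolynomial σ ℂ) : polyC a p ∈ polyAlg a :=
  Subalgebra.le_topologicalClosure _ ⟨p, rfl⟩

lemma polyAlg_closed : IsClosed (polyAlg a : Set C(Hull a, ℂ)) :=
  Subalgebra.isClosed_topologicalClosure _

lemma polyAlg_chars (χ : polyAlg a →ₐ[ℂ] ℂ) :
    ∃ z, ∀ f : polyAlg a, χ f = (f : C(Hull a, ℂ)) z := by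
  have : CompleteSpace (polyAlg a) := (polyAlg_closed a).completeSpace_coe
  have hb : ∀ f : polyAlg a, ‖χ f‖ ≤ ‖(f : C(Hull a, ℂ))‖ := by
    intro f
    have h1 := AlgHom.norm_apply_le_self_mul_norm_one χ f
    have h2 : ‖(1 : polyAlg a)‖ ≤ 1 := by
      change ‖(1 : C(Hull a, ℂ))‖ ≤ 1
      rw [ContinuousMap.norm_le _ zero_le_one]
      intro z; simp
    exact h1.trans (mul_le_of_le_one_right (norm_nonneg _) h2)
  let z : σ → ℂ := fun i => χ ⟨polyC a (MvPolynomial.X i), polyC_mem a _⟩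
  let ψ : MvPolynomial σ ℂ →ₐ[ℂ] polyAlg a := (polyC a).codRestrict _ (polyC_mem a)
  have hz : ∀ p, χ (ψ p) = MvPolynomial.eval z p := by
    intro p
    have : χ.comp ψ = MvPolynomial.aeval z := by
      ext i; simp [z, ψ]; rfl
    rw [← AlgHom.comp_apply, this, MvPolynomial.aeval_eq_eval]
  have hzH : z ∈ Hull a := by
    intro p
    rw [← hz]
    refine (hb _).trans ?_
    rw [ContinuousMap.norm_le _ (by positivity)]
    intro w
    change ‖polyC a p w‖ ≤ _
    rw [polyC_apply]
    exact w.2 p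
  refine ⟨⟨z, hzH⟩, fun f => ?_⟩
  have hcl : IsClosed {f : polyAlg a | χ f = (f : C(Hull a, ℂ)) ⟨z, hzH⟩} := by
    refine isClosed_eq (AlgHomClass.toAlgHom χ |>.toLinearMap.mkContinuous 1 (fun f => ?_)).continuous ?_
    · rw [one_mul]; exact hb f
    · exact (ContinuousEvalConst.continuous_eval_const _).comp continuous_subtype_val
  have hd : ∀ f : polyAlg a, f ∈ closure (Set.range ψ) := by
    intro f
    rw [closure_subtype]
    have : ((Subtype.val : polyAlg a → C(Hull a, ℂ)) '' Set.range ψ) = ((polyC a).range : Set _) := by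
      ext g; constructor
      · rintro ⟨_, ⟨p, rfl⟩, rfl⟩; exact ⟨p, rfl⟩
      · rintro ⟨p, rfl⟩; exact ⟨_, ⟨p, rfl⟩, rfl⟩
    rw [this]
    exact f.2
  refine hcl.closure_subset_iff.2 ?_ (hd f)
  rintro _ ⟨p, rfl⟩
  change χ (ψ p) = polyC a p _
  rw [hz, polyC_apply]

/-- the uniform algebra of the hull -/
noncomputable def hullU : Uni (Hull a) where
  alg := polyAlg a
  closed := polyAlg_closed a
  chars := polyAlg_chars a

theorem claim_hull {ι : Type*} [Fintype ι] [DecidableEq ι] (fx : Set ι) :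
    Claim (hullU a) fx ⊥ := by
  let e : MvPolynomial σ ℂ → (hullU a).alg := fun p => ⟨polyC a p, polyC_mem a p⟩
  refine induct ((Finset.univ : Finset σ).toList.map (fun i => e (MvPolynomial.X i)) ++
    (Finset.univ : Finset σ).toList.map (fun i => e (MvPolynomial.C (-Complex.I) * MvPolynomial.X i)))
    ⊥ fun M _ h => base M fun z hz z' hz' => ?_
  refine Subtype.ext (funext fun i => Complex.ext ?_ ?_)
  · obtain ⟨τ, hτ⟩ := h (e (MvPolynomial.X i)) (by
      rw [List.mem_append]; left
      exact List.mem_map.2 ⟨i, by simp, rfl⟩)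
    have h1 := hτ z hz
    have h2 := hτ z' hz'
    simp only [e, polyC_apply, MvPolynomial.eval_X] at h1 h2
    rw [h1, h2]
  · obtain ⟨τ, hτ⟩ := h (e (MvPolynomial.C (-Complex.I) * MvPolynomial.X i)) (by
      rw [List.mem_append]; right
      exact List.mem_map.2 ⟨i, by simp, rfl⟩)
    have h1 := hτ z hz
    have h2 := hτ z' hz'
    simp [e, polyC_apply] at h1 h2
    rw [h1, h2]

end hull
end LinHermite


namespace LinHermite
set_option linter.unusedSectionVars false
open Filter Topology

section final
variable {A : Type*} [NormedCommRing A] [NormedAlgebra ℂ A] [CompleteSpace A]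
variable {ι : Type*} [Fintype ι] [DecidableEq ι]

lemma isUnit_of_chars (x : A) (h : ∀ χ : A →ₐ[ℂ] ℂ, χ x ≠ 0) : IsUnit x := by
  by_contra hx
  obtain ⟨f, hf⟩ := WeakDual.CharacterSpace.exists_apply_eq_zero hx
  exact h (WeakDual.CharacterSpace.toAlgHom f) hf

lemma char_mem_hull {σ : Type*} [Fintype σ] (a : σ → A) (χ : A →ₐ[ℂ] ℂ) :
    (fun i => χ (a i)) ∈ Hull a := by
  intro p
  have : MvPolynomial.eval (fun i => χ (a i)) p = χ (MvPolynomial.aeval a p) := by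
    rw [← MvPolynomial.aeval_eq_eval, ← AlgHom.comp_apply, MvPolynomial.comp_aeval]
  rw [this]
  exact AlgHom.norm_apply_le_self_mul_norm_one χ _

theorem from_hull {σ : Type*} [Fintype σ] (a : σ → A) (fx : Set ι)
    (g : unitInterval × Hull a → Matrix ι ι ℂ) (hg : Continuous g)
    (P : ι → ι → MvPolynomial σ ℂ) (hP : ∀ z i j, g (0, z) i j = MvPolynomial.eval z.1 (P i j))
    (hrank : ∀ p, ∀ v : ι → ℂ, (∀ j, j ∉ fx → v j = 0) → (g p).mulVec v = 0 → v = 0)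
    (hdet : ∀ z, (g (1, z)).det ≠ 0) :
    ∃ G : Matrix ι ι A, IsUnit G ∧ ∀ i j, j ∈ fx → G i j = MvPolynomial.aeval a (P i j) := by
  have hmem : ∀ i j, ∀ s ∈ T00 Unit, (⟨fun p => g (p.1.2, p.2) i j,
      (hg.comp (by fun_prop : Continuous fun p : (Unit × unitInterval) × Hull a =>
        (p.1.2, p.2))).matrix_elem i j⟩ : C((Unit × unitInterval) × Hull a, ℂ)).comp
        (inc (Hull a) s) ∈ (hullU a).alg := by
    rintro i j ⟨u, t⟩ hs
    have ht : t = 0 := hs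
    subst ht
    have hm : polyC a (P i j) ∈ (hullU a).alg := polyC_mem a (P i j)
    convert hm using 1
    ext z
    rw [polyC_apply, ← hP]; rfl
  let G0 : Matrix ι ι (BA (hullU a) (T00 Unit)) := Matrix.of fun i j => BA.mk _ (hmem i j)
  have hG0 : ∀ p, evM (hullU a) (T00 Unit) p G0 = g (p.1.2, p.2) := fun p => by ext i j; rfl
  obtain ⟨G, hG, hGd⟩ := claim_hull a fx Unit ∅ isClosed_empty G0
    (fun p _ v hv h => hrank (p.1.2, p.2) v hv (by rw [← hG0]; exact h))
    (fun p hp _ => by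
      rw [hG0]
      rcases hp with hp | hp
      · exact hp.elim
      · have : p.1.2 = 1 := hp
        rw [this]; exact hdet _)
  let s0 : Unit × unitInterval := ((), 0)
  let γ : ι × ι → C(Hull a, ℂ) := fun q => (G q.1 q.2).fn.comp (inc (Hull a) s0)
  have hγm : ∀ q, γ q ∈ polyAlg a := fun q => BA.fn_mem (G q.1 q.2) s0 rfl
  have hγf : ∀ i j, j ∈ fx → γ (i, j) = polyC a (P i j) := by
    intro i j hj
    ext z
    have h1 := hG i j (s0, z) (Or.inl hj)
    have h2 : (G i j).fn (s0, z) - (G0 i j).fn (s0, z) = 0 := h1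
    rw [polyC_apply, ← hP]
    exact sub_eq_zero.1 h2
  have hXM : ∀ z, z ∈ XM (⊥ : Submonoid (hullU a).alg) := by
    intro z m hm
    rw [Submonoid.mem_bot] at hm
    subst hm
    simp
  let D : (ι × ι → C(Hull a, ℂ)) → C(Hull a, ℂ) := fun γ => (Matrix.of fun i j => γ (i, j)).det
  have hDz : ∀ γ z, D γ z = (Matrix.of fun i j => γ (i, j) z : Matrix ι ι ℂ).det := by
    intro γ z
    exact RingHom.map_det (ContinuousMap.evalAlgHom ℂ ℂ z).toRingHom _
  have hDc : Continuous D := by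
    refine Continuous.matrix_det ?_
    exact continuous_matrix fun i j => continuous_apply _
  have hDu : IsUnit (D γ) := by
    rw [ContinuousMap.isUnit_iff_forall_ne_zero]
    intro z
    rw [hDz]
    exact hGd (s0, z) (hXM z)
  have hO : IsOpen (D ⁻¹' {x | IsUnit x}) := Units.isOpen.preimage hDc
  classical
  let s : ι × ι → Set C(Hull a, ℂ) := fun q =>
    if q.2 ∈ fx then {polyC a (P q.1 q.2)} else ((polyC a).range : Set C(Hull a, ℂ))
  have hcl : γ ∈ closure (Set.univ.pi s) := by
    rw [closure_pi_set]
    intro q _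
    by_cases hq : q.2 ∈ fx
    · apply subset_closure
      simp only [s, if_pos hq]
      exact hγf q.1 q.2 hq
    · simp only [s, if_neg hq]
      exact hγm q
  obtain ⟨γ', hγu, hγs⟩ := mem_closure_iff.1 hcl _ hO hDu
  have hex : ∀ q, ∃ p, polyC a p = γ' q ∧ (q.2 ∈ fx → p = P q.1 q.2) := by
    intro q
    have hq' := hγs q (Set.mem_univ _)
    by_cases hq : q.2 ∈ fx
    · simp only [s, if_pos hq] at hq'
      exact ⟨_, hq'.symm, fun _ => rfl⟩
    · simp only [s, if_neg hq] at hq'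
      obtain ⟨p, hp⟩ := hq'
      exact ⟨p, hp, fun h => (hq h).elim⟩
  choose Q hQ hQf using hex
  refine ⟨Matrix.of fun i j => MvPolynomial.aeval a (Q (i, j)), ?_, fun i j hj => by
    rw [Matrix.of_apply, hQf (i, j) hj]⟩
  rw [Matrix.isUnit_iff_isUnit_det]
  apply isUnit_of_chars
  intro χ h0
  let z : Hull a := ⟨_, char_mem_hull a χ⟩
  have h1 := (ContinuousMap.isUnit_iff_forall_ne_zero _).1 hγu z
  apply h1
  rw [hDz, ← h0]
  have h2 := RingHom.map_det χ.toRingHom (Matrix.of fun i j => MvPolynomial.aeval a (Q (i, j)))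
  refine Eq.trans ?_ h2.symm
  congr 1
  ext i j
  change γ' (i, j) z = χ (MvPolynomial.aeval a (Q (i, j)))
  rw [← hQ, polyC_apply, ← MvPolynomial.aeval_eq_eval, ← AlgHom.comp_apply, MvPolynomial.comp_aeval]

variable (A) in
/-- compact product -/
def PP : Set (A → ℂ) := Set.univ.pi fun x => Metric.closedBall (0 : ℂ) (‖x‖ * ‖(1 : A)‖)

instance : CompactSpace (PP A) := isCompact_iff_compactSpace.1
  (isCompact_univ_pi fun _ => isCompact_closedBall _ _)

/-- point of a character -/
def ptC (χ : A →ₐ[ℂ] ℂ) : PP A := ⟨fun x => χ x, fun x _ => by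
  rw [mem_closedBall_zero_iff]; exact AlgHom.norm_apply_le_self_mul_norm_one χ _⟩

open Classical in
/-- extension by zero -/
noncomputable def extz (S : Finset A) (z : Hull (Subtype.val : S → A)) : PP A :=
  ⟨fun x => if h : x ∈ S then z.1 ⟨x, h⟩ else 0, fun x _ => by
    rw [mem_closedBall_zero_iff]
    dsimp only
    split_ifs with h
    · simpa using z.2 (MvPolynomial.X ⟨x, h⟩)
    · simp; positivity⟩

lemma extz_apply (S : Finset A) (z : Hull (Subtype.val : S → A)) (x : A) (h : x ∈ S) :
    (extz S z).1 x = z.1 ⟨x, h⟩ := by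
  simp [extz, h]

lemma extz_cont (S : Finset A) : Continuous (extz S) := by
  refine Continuous.subtype_mk (continuous_pi fun x => ?_) _
  by_cases h : x ∈ S
  · simp only [h, dif_pos]
    exact (continuous_apply _).comp continuous_subtype_val
  · simp only [h]
    exact continuous_const

lemma char_of_hull (w : PP A)
    (hw : ∀ p : MvPolynomial A ℂ, ‖MvPolynomial.eval w.1 p‖ ≤
      ‖MvPolynomial.aeval (id : A → A) p‖ * ‖(1 : A)‖) : ∃ χ, w = ptC χ := by
  have key : ∀ p : MvPolynomial A ℂ, MvPolynomial.aeval (id : A → A) p = 0 →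
      MvPolynomial.eval w.1 p = 0 := by
    intro p hp
    have := hw p
    rw [hp, norm_zero, zero_mul] at this
    exact norm_le_zero_iff.1 this
  have hsc : ∀ c : ℂ, w.1 (algebraMap ℂ A c) = c := by
    intro c
    have := key (MvPolynomial.X (algebraMap ℂ A c) - MvPolynomial.C c) (by simp)
    simpa [sub_eq_zero] using this
  refine ⟨{ toFun := w.1, map_one' := ?_, map_mul' := ?_, map_zero' := ?_, map_add' := ?_, commutes' := ?_ }, rfl⟩
  · simpa using hsc 1
  · intro x y
    have := key (MvPolynomial.X (x * y) - MvPolynomial.X x * MvPolynomial.X y) (by simp)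
    simpa [sub_eq_zero] using this
  · simpa using hsc 0
  · intro x y
    have := key (MvPolynomial.X (x + y) - (MvPolynomial.X x + MvPolynomial.X y)) (by simp)
    simpa [sub_eq_zero] using this
  · intro c; exact hsc c

theorem hull_approx (S1 : Finset A) (Bad : Set (PP A)) (hBad : IsClosed Bad)
    (h : ∀ χ, ptC χ ∉ Bad) :
    ∃ S : Finset A, S1 ⊆ S ∧ ∀ z : Hull (Subtype.val : S → A), extz S z ∉ Bad := by
  classical
  let t : MvPolynomial A ℂ → Set (PP A) := fun p => {w | ‖MvPolynomial.eval w.1 p‖ ≤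
      ‖MvPolynomial.aeval (id : A → A) p‖ * ‖(1 : A)‖}
  have ht : ∀ p, IsClosed (t p) := fun p =>
    isClosed_le ((MvPolynomial.continuous_eval p).comp continuous_subtype_val).norm continuous_const
  obtain ⟨u, hu⟩ := hBad.isCompact.elim_finite_subfamily_closed t ht (by
    rw [Set.eq_empty_iff_forall_notMem]
    rintro w ⟨hwB, hw⟩
    obtain ⟨χ, rfl⟩ := char_of_hull w fun p => Set.mem_iInter.1 hw p
    exact h χ hwB)
  refine ⟨S1 ∪ u.biUnion fun p => p.vars, Finset.subset_union_left, ?_⟩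
  set S := S1 ∪ u.biUnion fun p => p.vars with hS
  intro z hz
  refine Set.eq_empty_iff_forall_notMem.1 hu (extz S z) ⟨hz, ?_⟩
  refine Set.mem_iInter₂.2 fun p hp => ?_
  obtain ⟨q, rfl⟩ := MvPolynomial.exists_rename_eq_of_vars_subset_range p (Subtype.val : S → A)
    Subtype.val_injective (by
      intro x hx
      refine ⟨⟨x, ?_⟩, rfl⟩
      rw [hS]
      exact Finset.mem_union_right _ (Finset.mem_biUnion.2 ⟨p, hp, hx⟩))
  change ‖MvPolynomial.eval (extz S z).1 (MvPolynomial.rename Subtype.val q)‖ ≤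
    ‖MvPolynomial.aeval (id : A → A) (MvPolynomial.rename Subtype.val q)‖ * ‖(1 : A)‖
  rw [MvPolynomial.eval_rename, MvPolynomial.aeval_rename]
  have : (extz S z).1 ∘ Subtype.val = z.1 := funext fun i => extz_apply S z i.1 i.2
  rw [this]
  exact z.2 q

end final
end LinHermite


namespace LinHermite
set_option linter.unusedSectionVars false
open Filter Topology

lemma complete_cols {n k : ℕ} (hkn : k ≤ n) (M : Matrix (Fin n) (Fin k) ℂ)
    (N : Matrix (Fin k) (Fin n) ℂ) (h : N * M = 1) :
    ∃ C : Matrix (Fin n) (Fin n) ℂ, C.det ≠ 0 ∧ ∀ i j, C i (Fin.castLE hkn j) = M i j := by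
  have hli : LinearIndependent ℂ (fun j => M.col j) := by
    rw [← Matrix.mulVec_injective_iff]
    intro v w hvw
    have : N.mulVec (M.mulVec v) = N.mulVec (M.mulVec w) := congrArg _ hvw
    simpa [Matrix.mulVec_mulVec, h] using this
  let b := Module.Basis.sumExtend hli
  have hfin : Finite (Fin k ⊕ Module.Basis.sumExtendIndex hli) := Module.Finite.finite_basis b
  have hfin2 : Finite (Module.Basis.sumExtendIndex hli) :=
    Finite.of_injective (Sum.inr : _ → Fin k ⊕ Module.Basis.sumExtendIndex hli) Sum.inr_injective
  have := Fintype.ofFinite (Module.Basis.sumExtendIndex hli)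
  have hcard : k + Fintype.card (Module.Basis.sumExtendIndex hli) = n := by
    have h1 := Module.finrank_eq_card_basis b
    simpa using h1.symm
  obtain ⟨e⟩ : Nonempty (Module.Basis.sumExtendIndex hli ≃ Fin (n - k)) :=
    ⟨Fintype.equivFinOfCardEq (by omega)⟩
  let e2 : Fin k ⊕ Module.Basis.sumExtendIndex hli ≃ Fin n :=
    ((Equiv.sumCongr (Equiv.refl _) e).trans finSumFinEquiv).trans (finCongr (by omega))
  let b' := b.reindex e2
  refine ⟨Matrix.of fun i j => b' j i, ?_, ?_⟩
  · have h1 := b'.linearIndependent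
    have h2 : IsUnit (Matrix.of fun i j => b' j i : Matrix (Fin n) (Fin n) ℂ) := by
      rw [← Matrix.linearIndependent_cols_iff_isUnit]
      exact h1
    exact ((Matrix.isUnit_iff_isUnit_det _).1 h2).ne_zero
  · intro i j
    have : e2.symm (Fin.castLE hkn j) = Sum.inl j := by
      rw [Equiv.symm_apply_eq]
      ext; simp [e2]
    rw [Matrix.of_apply, Module.Basis.reindex_apply, this]
    simp [b, Module.Basis.sumExtend]
    rfl

lemma HH_rank {ι : Type*} [Fintype ι] [DecidableEq ι] (fx : Set ι) (x : Matrix ι ι ℂ)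
    (h : (HH fx x).det ≠ 0) (v : ι → ℂ) (hv : ∀ j, j ∉ fx → v j = 0) (h0 : x.mulVec v = 0) :
    v = 0 := by
  have hD : (DD fx).mulVec v = v := by
    ext j; rw [DD_mulVec]; split_ifs with hj
    · rfl
    · exact (hv j hj).symm
  have h1 : (HH fx x).mulVec v = 0 := by
    rw [HH, Matrix.add_mulVec, ← Matrix.mulVec_mulVec, ← Matrix.mulVec_mulVec _ x, hD, h0,
      ← Matrix.mulVec_mulVec, Matrix.sub_mulVec, Matrix.one_mulVec, hD]
    simp
  by_contra hne
  exact h (Matrix.exists_mulVec_eq_zero_iff.1 ⟨v, hne, h1⟩)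

section main
variable {A : Type*} [NormedCommRing A] [NormedAlgebra ℂ A] [CompleteSpace A]

/-- characters as points of the product -/
noncomputable def iX (x : WeakDual.characterSpace ℂ A) : PP A :=
  ptC (WeakDual.CharacterSpace.toAlgHom x)

lemma iX_cont : Continuous (iX : WeakDual.characterSpace ℂ A → PP A) := by
  refine Continuous.subtype_mk (continuous_pi fun a => ?_) _
  exact (WeakDual.eval_continuous a).comp continuous_subtype_val

lemma iX_inj : Function.Injective (iX : WeakDual.characterSpace ℂ A → PP A) := by
  intro x y h
  apply WeakDual.CharacterSpace.ext
  intro a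
  exact congrFun (congrArg Subtype.val h) a

theorem main (hA : ContractibleSpace (WeakDual.characterSpace ℂ A))
    (n k : ℕ) (hkn : k < n) (F : Matrix (Fin n) (Fin k) A)
    (hF : ∃ B : Matrix (Fin k) (Fin n) A, B * F = 1) :
    ∃ G : Matrix (Fin n) (Fin n) A, IsUnit G ∧
      ∀ (i : Fin n) (j : Fin k), G i (Fin.castLE hkn.le j) = F i j := by
  classical
  obtain ⟨B, hB⟩ := hF
  obtain ⟨x0, ⟨H⟩⟩ := id_nullhomotopic (WeakDual.characterSpace ℂ A)
  have hBχ : ∀ χ : A →ₐ[ℂ] ℂ, B.map χ * F.map χ = 1 := by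
    intro χ
    rw [← Matrix.map_mul, hB]
    exact Matrix.map_one _ (map_zero χ) (map_one χ)
  obtain ⟨C, hC, hCF⟩ := complete_cols hkn.le (F.map (WeakDual.CharacterSpace.toAlgHom x0))
    (B.map (WeakDual.CharacterSpace.toAlgHom x0)) (hBχ _)
  have hinj : Function.Injective (Fin.castLE hkn.le) := Fin.castLE_injective _
  let fx : Set (Fin n) := Set.range (Fin.castLE hkn.le)
  let F' : Fin n → Fin n → A := fun i => Function.extend (Fin.castLE hkn.le) (F i) 0
  have hF' : ∀ i j, F' i (Fin.castLE hkn.le j) = F i j := fun i j => hinj.extend_apply _ _ _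
  have hCF' : ∀ i j, j ∈ fx → C i j = x0 (F' i j) := by
    rintro i _ ⟨j, rfl⟩
    rw [hCF, hF']; rfl
  have hemb : IsClosedEmbedding (Prod.map (id : unitInterval → unitInterval)
      (iX : WeakDual.characterSpace ℂ A → PP A)) :=
    Continuous.isClosedEmbedding (continuous_id.prodMap iX_cont)
      (Function.injective_id.prodMap iX_inj)
  have hext : ∀ i j, ∃ q : C(unitInterval × PP A, ℂ), ∀ t x, q (t, iX x) = H (t, x) (F' i j) := by
    intro i j
    obtain ⟨q, hq⟩ := ContinuousMap.exists_extension hemb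
      (⟨fun p => H p (F' i j), ((WeakDual.eval_continuous (F' i j)).comp
        continuous_subtype_val).comp H.continuous⟩ :
        C(unitInterval × WeakDual.characterSpace ℂ A, ℂ))
    exact ⟨q, fun t x => congrArg (fun f => f (t, x)) hq⟩
  choose q hq using hext
  let g : unitInterval × PP A → Matrix (Fin n) (Fin n) ℂ := fun p => Matrix.of fun i j =>
    if j ∈ fx then q i j p + (1 - ((p.1 : ℝ) : ℂ)) * (p.2.1 (F' i j) - q i j (0, p.2)) +
      ((p.1 : ℝ) : ℂ) * (C i j - q i j (1, p.2)) else C i j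
  have hg : Continuous g := by
    refine continuous_matrix fun i j => ?_
    by_cases hj : j ∈ fx
    · simp only [g, Matrix.of_apply, if_pos hj]
      have c1 : Continuous fun p : unitInterval × PP A => p.2.1 (F' i j) :=
        (continuous_apply _).comp (continuous_subtype_val.comp continuous_snd)
      fun_prop
    · simp only [g, Matrix.of_apply, if_neg hj]
      exact continuous_const
  have hg0 : ∀ w i j, g (0, w) i j = if j ∈ fx then w.1 (F' i j) else C i j := by
    intro w i j
    simp only [g, Matrix.of_apply]
    split_ifs <;> simp
  have hg1 : ∀ w, g (1, w) = C := by
    intro w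
    ext i j
    simp only [g, Matrix.of_apply]
    split_ifs <;> simp
  have hgX : ∀ t x i j, j ∈ fx → g (t, iX x) i j = H (t, x) (F' i j) := by
    intro t x i j hj
    simp only [g, Matrix.of_apply, if_pos hj, hq]
    have e0 : H (0, x) = x := by simp
    have e1 : H (1, x) = x0 := by simp
    rw [e0, e1, hCF' i j hj]
    have : (iX x).1 (F' i j) = x (F' i j) := rfl
    rw [this]; ring
  have hrank : ∀ t x, (HH fx (g (t, iX x))).det ≠ 0 := by
    intro t x
    refine HH_det fx _ fun v hv h0 => ?_
    let χ := WeakDual.CharacterSpace.toAlgHom (H (t, x))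
    have h1 : (F.map χ).mulVec (fun j => v (Fin.castLE hkn.le j)) = 0 := by
      ext i
      have := congrFun h0 i
      refine Eq.trans ?_ this
      refine Fintype.sum_of_injective (Fin.castLE hkn.le) hinj _ _ (fun j hj => ?_) (fun j => ?_)
      · rw [hv j hj, mul_zero]
      · change χ (F i j) * v (Fin.castLE hkn.le j) =
          g (t, iX x) i (Fin.castLE hkn.le j) * v (Fin.castLE hkn.le j)
        rw [hgX t x i _ ⟨j, rfl⟩, hF']; rfl
    have h2 : (fun j => v (Fin.castLE hkn.le j)) = 0 := by
      have := congrArg (B.map χ).mulVec h1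
      simpa [Matrix.mulVec_mulVec, hBχ] using this
    ext j
    by_cases hj : j ∈ fx
    · obtain ⟨j, rfl⟩ := hj
      exact congrFun h2 j
    · exact hv j hj
  let Bad : Set (PP A) := Prod.snd '' {p : unitInterval × PP A | (HH fx (g p)).det = 0}
  have hHc : Continuous fun s => HH fx (g s) := by
    unfold HH; fun_prop
  have hBad : IsClosed Bad := (IsCompact.image
    (isClosed_eq hHc.matrix_det continuous_const).isCompact continuous_snd).isClosed
  obtain ⟨S, hS1, hS⟩ := hull_approx
    (Finset.univ.image fun p : Fin n × Fin n => F' p.1 p.2) Bad hBad (by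
      rintro χ ⟨⟨t, w⟩, hp, hw⟩
      have hw' : w = iX (WeakDual.CharacterSpace.equivAlgHom.symm χ) := by
        rw [show w = ptC χ from hw]; rfl
      subst hw'
      exact hrank t _ hp)
  have hFS : ∀ i j, F' i j ∈ S := fun i j =>
    hS1 (Finset.mem_image.2 ⟨(i, j), Finset.mem_univ _, rfl⟩)
  let P : Fin n → Fin n → MvPolynomial S ℂ := fun i j =>
    if j ∈ fx then MvPolynomial.X ⟨F' i j, hFS i j⟩ else MvPolynomial.C (C i j)
  obtain ⟨G, hGu, hG⟩ := from_hull (Subtype.val : S → A) fx (fun p => g (p.1, extz S p.2))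
    (hg.comp (continuous_fst.prodMk ((extz_cont S).comp continuous_snd))) P
    (by
      intro z i j
      rw [hg0]
      simp only [P]
      split_ifs
      · rw [MvPolynomial.eval_X, extz_apply]
      · rw [MvPolynomial.eval_C])
    (by
      intro p
      refine HH_rank fx _ fun h0 => ?_
      exact hS p.2 ⟨(p.1, extz S p.2), h0, rfl⟩)
    (by
      intro z
      rw [hg1]; exact hC)
  refine ⟨G, hGu, fun i j => ?_⟩
  rw [hG i _ ⟨j, rfl⟩]
  simp only [P]
  rw [if_pos ⟨j, rfl⟩, MvPolynomial.aeval_X]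
  exact hF' i j

end main
end LinHermite


/-- A commutative unital complex Banach algebra with contractible character space is a Hermite
ring: every left invertible `n × k` matrix (`k < n`) over `A` can be completed to an invertible
`n × n` matrix whose first `k` columns are the given ones. -/
theorem hermite_of_contractible_characterSpace
    {A : Type*} [NormedCommRing A] [NormedAlgebra ℂ A] [CompleteSpace A]
    (hA : ContractibleSpace (WeakDual.characterSpace ℂ A))
    (n k : ℕ) (hkn : k < n)
    (F : Matrix (Fin n) (Fin k) A)
    (hF : ∃ B : Matrix (Fin k) (Fin n) A, B * F = 1) :
    ∃ G : Matrix (Fin n) (Fin n) A, IsUnit G ∧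
      ∀ (i : Fin n) (j : Fin k), G i (Fin.castLE hkn.le j) = F i j := by
  exact LinHermite.main hA n k hkn F hF
end

section
/- The set of functions ρ : ℝ≥0 → ℝ (on the additive monoid of nonnegative reals) satisfying ρ(0) = 1, ρ(x + y) = ρ(x)·ρ(y) for all x, y ≥ 0, and 0 ≤ ρ(s) ≤ 1 for all s ≥ 0, endowed with the topology of pointwise convergence (the subspace topology from the product topology on ℝ≥0 → ℝ), is path-connected. -/
/-- The space of bounded nonnegative semicharacters of the additive monoid `[0,∞)` — functions
`ρ : ℝ≥0 → ℝ` with `ρ 0 = 1`, `ρ (x + y) = ρ x * ρ y`, and `0 ≤ ρ s ≤ 1`, with the topology of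
pointwise convergence — is path-connected. -/
theorem semicharSpace_nnreal_pathConnected :
    PathConnectedSpace
      {ρ : NNReal → ℝ // ρ 0 = 1 ∧ (∀ x y : NNReal, ρ (x + y) = ρ x * ρ y) ∧
        ∀ s : NNReal, ρ s ∈ Set.Icc (0 : ℝ) 1} := by
  let X := {ρ : NNReal → ℝ // ρ 0 = 1 ∧ (∀ x y : NNReal, ρ (x + y) = ρ x * ρ y) ∧
        ∀ s : NNReal, ρ s ∈ Set.Icc (0 : ℝ) 1}
  -- the path `t ↦ ρ(s) (1 - t)^s` joins `ρ` to the indicator of `0`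
  let F : X → unitInterval → X := fun ρ t =>
    ⟨fun s => ρ.1 s * (1 - (t : ℝ)) ^ (s : ℝ), by
      have h0 : (0 : ℝ) ≤ 1 - t := by linarith [t.2.2]
      have h1 : 1 - (t : ℝ) ≤ 1 := by linarith [t.2.1]
      obtain ⟨ρ, ha, hb, hc⟩ := ρ
      refine ⟨by simp [ha], fun x y => ?_, fun s => ⟨?_, ?_⟩⟩
      · simp only [hb, NNReal.coe_add]
        rw [Real.rpow_add_of_nonneg h0 x.coe_nonneg y.coe_nonneg]
        ring
      · exact mul_nonneg (hc s).1 (Real.rpow_nonneg h0 _)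
      · exact mul_le_one₀ (hc s).2 (Real.rpow_nonneg h0 _) (Real.rpow_le_one h0 h1 s.2)⟩
  have hF : ∀ ρ, Continuous (F ρ) := fun ρ => by
    refine Continuous.subtype_mk (continuous_pi fun s => ?_) _
    exact continuous_const.mul
      ((Real.continuous_rpow_const s.2).comp (continuous_const.sub continuous_subtype_val))
  let one : X := ⟨fun _ => 1, by simp⟩
  have hJ : ∀ ρ : X, Joined ρ (F one 1) := fun ρ => by
    refine ⟨⟨⟨F ρ, hF ρ⟩, ?_, ?_⟩⟩
    · apply Subtype.ext
      funext s
      simp [F]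
    · apply Subtype.ext
      funext s
      rcases eq_or_ne s 0 with rfl | hs
      · simp [F, one, ρ.2.1]
      · have : (s : ℝ) ≠ 0 := by exact_mod_cast hs
        simp [F, one, Real.zero_rpow this]
  exact ⟨⟨one⟩, fun x y => (hJ x).trans (hJ y).symm⟩
end
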